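/- Characterization of Ω-numbers (Solovay; Calude–Hertling–Khoussainov–Wang; Kučera–Slaman): For a left-c.e. real α ∈ (0,1), the following are equivalent: (i) α = Ω_V for some universal prefix-free machine V; (ii) α is Ω-like, i.e. β ≤_S α for every left-c.e. real β; (iii) α is Martin-Löf random. -/

import Mathlib

open scoped ENNReal NNReal Classical

namespace AR

/-- Elements of Cantor space `2^ω`: infinite binary sequences. -/
abbrev Seq := ℕ → Bool

/-- Finite binary strings `2^{<ω}`. -/
abbrev Str := List Bool

/-- The first `n` bits of a sequence `A`, as a finite string (`A↾n`). -/
def pre (A : Seq) (n : ℕ) : Str := List.ofFn fun i : Fin n => A i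

/-- The basic clopen cylinder `[σ]` of all sequences extending `σ`. -/
def cyl (σ : Str) : Set Seq := {A | pre A σ.length = σ}

/-- A measure on Cantor space is *fair-coin* if every cylinder `[σ]` has measure
`2^{-|σ|}`; this uniquely characterizes the usual product measure `μ` on `2^ω`. -/
def FairCoin (μ : MeasureTheory.Measure Seq) : Prop :=
  ∀ σ : Str, μ (cyl σ) = (2 : ℝ≥0∞)⁻¹ ^ σ.length

/-- A machine is a partial computable function `2^{<ω} ⇀ 2^{<ω}`. -/
def IsMachine (M : Str →. Str) : Prop := Partrec M

/-- Kolmogorov complexity of `τ` relative to the machine `M`: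
`C_M(τ) = min{|σ| : M(σ)↓ = τ}`, with value `∞` if no such `σ` exists. -/
noncomputable def Cplx (M : Str →. Str) (τ : Str) : ℕ∞ :=
  sInf ((fun σ : Str => (σ.length : ℕ∞)) '' {σ | τ ∈ M σ})

/-- A universal machine: a machine simulating every machine up to an additive
constant.  `Cplx U` for universal `U` is plain Kolmogorov complexity `C`. -/
def UniversalMachine (U : Str →. Str) : Prop :=
  IsMachine U ∧ ∀ M : Str →. Str, IsMachine M → ∃ c : ℕ, ∀ τ, Cplx U τ ≤ Cplx M τ + c

/-- A set of strings is prefix-free if none of its elements is a proper initial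
segment of another. -/
def PrefixFree (S : Set Str) : Prop :=
  ∀ σ ∈ S, ∀ τ ∈ S, σ <+: τ → σ = τ

/-- A prefix-free machine: a machine whose domain is prefix-free. -/
def PrefixFreeMachine (M : Str →. Str) : Prop :=
  IsMachine M ∧ PrefixFree {σ | (M σ).Dom}

/-- A universal prefix-free machine.  `Cplx U` for such `U` is prefix-free
Kolmogorov complexity `K`. -/
def UniversalPFMachine (U : Str →. Str) : Prop :=
  PrefixFreeMachine U ∧
    ∀ M : Str →. Str, PrefixFreeMachine M → ∃ c : ℕ, ∀ τ, Cplx U τ ≤ Cplx M τ + c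

/-- A c.e. (recursively enumerable) predicate. -/
def CEPred {α} [Primcodable α] (p : α → Prop) : Prop :=
  Partrec fun a => Part.assert (p a) fun _ => Part.some ()

/-- A Martin-Löf test: a sequence of uniformly Σ⁰₁ classes `U i`, given by a single
c.e. set `W` of pairs, with `μ (U i) ≤ 2^{-i}`. -/
def MLTest (μ : MeasureTheory.Measure Seq) (U : ℕ → Set Seq) : Prop :=
  ∃ W : Set (ℕ × Str), CEPred (· ∈ W) ∧
    (∀ i, U i = ⋃ σ ∈ {σ : Str | (i, σ) ∈ W}, cyl σ) ∧
    ∀ i, μ (U i) ≤ (2 : ℝ≥0∞)⁻¹ ^ i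

/-- `A` is Martin-Löf random if it passes every Martin-Löf test. -/
def MLRandom (μ : MeasureTheory.Measure Seq) (A : Seq) : Prop :=
  ∀ U : ℕ → Set Seq, MLTest μ U → A ∉ ⋂ i, U i

/-- The halting probability `Ω_V = Σ_{σ ∈ dom V} 2^{-|σ|}` of a machine `V`. -/
noncomputable def Omega (V : Str →. Str) : ℝ :=
  ∑' σ : Str, if (V σ).Dom then (2 : ℝ)⁻¹ ^ σ.length else 0

/-- The real number `0.A` in `[0,1]` whose binary expansion is `A ∈ 2^ω`. -/
noncomputable def binExp (A : Seq) : ℝ :=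
  ∑' n : ℕ, cond (A n) ((2 : ℝ)⁻¹ ^ (n + 1)) 0

/-- A real is left-c.e. if it is the limit of a computable strictly increasing
sequence of rationals. -/
def LeftCE (x : ℝ) : Prop :=
  ∃ q : ℕ → ℚ, Computable q ∧ StrictMono q ∧
    Filter.Tendsto (fun n => (q n : ℝ)) Filter.atTop (nhds x)

/-- Solovay reducibility `a ≤_S b` for (left-c.e.) reals: there are `c ∈ ℕ` and a
partial computable `f : ℚ ⇀ ℚ` such that for every rational `q < b`, `f(q)↓`,
`f(q) < a` and `a - f(q) < c (b - q)`. -/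
def SolovayLE (a b : ℝ) : Prop :=
  ∃ (c : ℕ) (f : ℚ →. ℚ), Partrec f ∧
    ∀ q : ℚ, (q : ℝ) < b →
      ∃ r ∈ f q, (r : ℝ) < a ∧ a - (r : ℝ) < c * (b - (q : ℝ))

/-!
Suppose first that `α = Ω_V` for a universal `V` and that every component of a Martin-Löf test has
an interval containing `α`. Tile `[0, α)` by dyadic intervals that appear as `Ω_V` is approximated.
Those tiles that lie in a component of small measure have small total weight, so by Kraft–Chaitin
they get programs that are shorter by more than the coding constant of `V`. The tiles that appear
late thus have programs weighing at least twice as much as the tiles, but they tile exactly what is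
then missing from `Ω_V`, so this is too much. Applied to intervals with right endpoint `α`, the same
argument shows that `α` is not dyadic.

Suppose next that `α` is random, and let `β` be left-c.e. For `ε > 0`, whenever the approximation of
`α` reaches the current target, copy the growth of `β` since the last such stage, scaled by `ε`,
into a new target (Kučera–Slaman). The intervals from the approximation of `α` at these stages to
the new targets weigh `O(ε)`, so they form a test. Since `α` passes it, for some `ε` all targets lie
below `α`, are therefore reached, and show `β ≤_S α`.

Suppose last that `Ω_U ≤_S α` for a universal `U`. For small `2⁻ᵏ` the difference `α - 2⁻ᵏ Ω_U` is
left-c.e., so grafting `U` above a string of length `k` and adding halting strings whose weight is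
this difference gives a universal machine with halting probability `α`.
-/

section Computability

open Encodable

variable {α β γ : Type*} [Primcodable α] [Primcodable β] [Primcodable γ]

attribute [fun_prop] Computable Computable.id Computable.const Computable.comp Computable.pair
  Computable.fst Computable.snd Computable.succ Computable.unpair Computable.encode
  Computable.decode Computable.option_some Computable.list_length
  ComputablePred ComputablePred.not

@[fun_prop]
theorem computablePred_comp {p : β → Prop} {f : α → β} (hp : ComputablePred p)
    (hf : Computable f) : ComputablePred fun a => p (f a) := by
  obtain ⟨_, hp⟩ := hp
  exact Computable.computablePred (hp.comp hf)

@[fun_prop]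
theorem computablePred_and {p q : α → Prop} (hp : ComputablePred p) (hq : ComputablePred q) :
    ComputablePred fun a => p a ∧ q a := by
  obtain ⟨_, hp⟩ := hp
  obtain ⟨_, hq⟩ := hq
  refine Computable.computablePred ((Primrec.and.to_comp.comp hp hq).of_eq fun a => ?_)
  exact (Bool.decide_and _ _).symm

@[fun_prop]
theorem computablePred_or {p q : α → Prop} (hp : ComputablePred p) (hq : ComputablePred q) :
    ComputablePred fun a => p a ∨ q a :=
  (computablePred_and hp.not hq.not).not.of_eq fun _ => or_iff_not_and_not.symm

@[fun_prop]
theorem computablePred_imp {p q : α → Prop} (hp : ComputablePred p) (hq : ComputablePred q) :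
    ComputablePred fun a => p a → q a :=
  (computablePred_or hp.not hq).of_eq fun _ => imp_iff_not_or.symm

@[fun_prop]
theorem computablePred_eq {f g : α → β} (hf : Computable f) (hg : Computable g) :
    ComputablePred fun a => f a = g a :=
  computablePred_comp (p := fun x : β × β => x.1 = x.2) Primrec.eq.computablePred (hf.pair hg)

@[fun_prop]
theorem computablePred_nat_le {f g : α → ℕ} (hf : Computable f) (hg : Computable g) :
    ComputablePred fun a => f a ≤ g a :=
  computablePred_comp (p := fun x : ℕ × ℕ => x.1 ≤ x.2) Primrec.nat_le.computablePred (hf.pair hg)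

@[fun_prop]
theorem computablePred_nat_lt {f g : α → ℕ} (hf : Computable f) (hg : Computable g) :
    ComputablePred fun a => f a < g a :=
  computablePred_comp (p := fun x : ℕ × ℕ => x.1 < x.2) Primrec.nat_lt.computablePred (hf.pair hg)

@[fun_prop]
theorem computablePred_forall_lt {p : α → ℕ → Prop} {f : α → ℕ}
    (hp : ComputablePred fun x : α × ℕ => p x.1 x.2) (hf : Computable f) :
    ComputablePred fun a => ∀ k < f a, p a k := by
  have hrec : Computable fun a =>
      (Nat.rec true (fun k b => b && decide (p a k)) (f a) : Bool) :=
    Computable.nat_rec (h := fun a (x : ℕ × Bool) => x.2 && decide (p a x.1)) hf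
      (Computable.const true) (Primrec.and.to_comp.comp (by fun_prop)
        (hp.decide.comp (g := fun y : α × ℕ × Bool => (y.1, y.2.1)) (by fun_prop)))
  refine Computable.computablePred (hrec.of_eq fun a => ?_)
  induction f a with
  | zero => simp
  | succ n ih => rw [Bool.eq_iff_iff, decide_eq_true_iff, Nat.forall_lt_succ_right]; simp [ih]

@[fun_prop]
theorem computablePred_exists_lt {p : α → ℕ → Prop} {f : α → ℕ}
    (hp : ComputablePred fun x : α × ℕ => p x.1 x.2) (hf : Computable f) :
    ComputablePred fun a => ∃ k < f a, p a k :=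
  (computablePred_forall_lt (p := fun a k => ¬ p a k) hp.not hf).not.of_eq fun a => by
    push Not; rfl

@[fun_prop]
theorem computablePred_forall_eq_some {p : α → β → Prop} {f : α → Option β}
    (hp : ComputablePred fun x : α × β => p x.1 x.2) (hf : Computable f) :
    ComputablePred fun a => ∀ b, f a = some b → p a b := by
  refine Computable.computablePred ((Computable.option_casesOn hf (Computable.const true)
    (g := fun a b => decide (p a b)) hp.decide).of_eq fun a => ?_)
  cases f a <;> simp

@[fun_prop]
theorem computablePred_exists_eq_some {p : α → β → Prop} {f : α → Option β}
    (hp : ComputablePred fun x : α × β => p x.1 x.2) (hf : Computable f) :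
    ComputablePred fun a => ∃ b, f a = some b ∧ p a b :=
  (computablePred_forall_eq_some (p := fun a b => ¬ p a b) hp.not hf).not.of_eq fun a => by simp

@[fun_prop]
theorem computablePred_forall_encode_lt {p : α → β → Prop} {f : α → ℕ}
    (hp : ComputablePred fun x : α × β => p x.1 x.2) (hf : Computable f) :
    ComputablePred fun a => ∀ b, encode b < f a → p a b := by
  have hdecode : Computable (decode₂ β) := Primrec.decode₂.to_comp
  have hbounded : ComputablePred fun a => ∀ k < f a, ∀ b, decode₂ β k = some b → p a b := by
    fun_prop
  exact hbounded.of_eq fun a => ⟨fun h b hb => h _ hb b (decode₂_encode b), fun h k hk b hb =>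
    h b ((mem_decode₂.1 hb).trans_lt hk)⟩

@[fun_prop]
theorem computable_decide {p : α → Prop} [DecidablePred p] (hp : ComputablePred p) :
    Computable fun a => decide (p a) := hp.decide

@[fun_prop]
theorem computable_ite {p : α → Prop} [DecidablePred p] {f g : α → β} (hp : ComputablePred p)
    (hf : Computable f) (hg : Computable g) : Computable fun a => if p a then f a else g a :=
  (Computable.cond hp.decide hf hg).of_eq fun _ => Bool.cond_decide _ _ _

@[fun_prop]
theorem computable_option_bind {f : α → Option β} {g : α → β → Option γ} (hf : Computable f)
    (hg : Computable fun x : α × β => g x.1 x.2) : Computable fun a => (f a).bind (g a) :=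
  Computable.option_bind hf hg

@[fun_prop]
theorem computable_option_map {f : α → Option β} {g : α → β → γ} (hf : Computable f)
    (hg : Computable fun x : α × β => g x.1 x.2) : Computable fun a => (f a).map (g a) :=
  Computable.option_map hf hg

@[fun_prop]
theorem computable_list_append {f g : α → List β} (hf : Computable f) (hg : Computable g) :
    Computable fun a => f a ++ g a := Computable.list_append.comp hf hg

@[fun_prop]
theorem computable_list_cons {f : α → β} {g : α → List β} (hf : Computable f)
    (hg : Computable g) : Computable fun a => f a :: g a := Computable.list_cons.comp hf hg

@[fun_prop]
theorem computable_nat_add {f g : α → ℕ} (hf : Computable f) (hg : Computable g) :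
    Computable fun a => f a + g a := Primrec.nat_add.to_comp.comp hf hg

@[fun_prop]
theorem computable_nat_sub {f g : α → ℕ} (hf : Computable f) (hg : Computable g) :
    Computable fun a => f a - g a := Primrec.nat_sub.to_comp.comp hf hg

@[fun_prop]
theorem computable_nat_mul {f g : α → ℕ} (hf : Computable f) (hg : Computable g) :
    Computable fun a => f a * g a := Primrec.nat_mul.to_comp.comp hf hg

@[fun_prop]
theorem computable_nat_div {f g : α → ℕ} (hf : Computable f) (hg : Computable g) :
    Computable fun a => f a / g a := Primrec.nat_div.to_comp.comp hf hg

@[fun_prop]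
theorem computable_nat_mod {f g : α → ℕ} (hf : Computable f) (hg : Computable g) :
    Computable fun a => f a % g a := Primrec.nat_mod.to_comp.comp hf hg

@[fun_prop]
theorem computable_nat_pow {f g : α → ℕ} (hf : Computable f) (hg : Computable g) :
    Computable fun a => f a ^ g a :=
  (Primrec₂.unpaired'.1 Nat.Primrec.pow).to_comp.comp hf hg

@[fun_prop]
theorem computable_sum_range [AddCommMonoid β] {F : α → ℕ → β} {N : α → ℕ}
    (hadd : Computable fun x : β × β => x.1 + x.2)
    (hF : Computable fun x : α × ℕ => F x.1 x.2) (hN : Computable N) :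
    Computable fun a => ∑ k ∈ Finset.range (N a), F a k := by
  have hrec : Computable fun a => (Nat.rec 0 (fun k s => s + F a k) (N a) : β) :=
    Computable.nat_rec (h := fun a (x : ℕ × β) => x.2 + F a x.1) hN (Computable.const 0)
      (hadd.comp (g := fun y : α × ℕ × β => (y.2.2, F y.1 y.2.1)) (by fun_prop))
  refine hrec.of_eq fun a => ?_
  induction N a with
  | zero => simp
  | succ n ih => rw [Finset.sum_range_succ, ← ih]

theorem computable_of_succ_eq {F : α → ℕ → β} {step : α → ℕ × β → β}
    (hzero : Computable fun a => F a 0) (hstep : Computable fun x : α × ℕ × β => step x.1 x.2)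
    (hsucc : ∀ a n, F a (n + 1) = step a (n, F a n)) :
    Computable fun x : α × ℕ => F x.1 x.2 := by
  refine (Computable.nat_rec (f := fun x : α × ℕ => x.2) (g := fun x => F x.1 0)
    (h := fun x y => step x.1 y) Computable.snd (hzero.comp Computable.fst)
    (hstep.comp (g := fun z : (α × ℕ) × ℕ × β => (z.1.1, z.2)) (by fun_prop))).of_eq ?_
  rintro ⟨a, n⟩
  induction n with
  | zero => rfl
  | succ n ih => simp only [hsucc] at ih ⊢; rw [← ih]

theorem computable_sum_of_encode_lt [AddCommMonoid γ] {D : α → Finset β} {F : α → β → γ}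
    {N : α → ℕ} (hadd : Computable fun x : γ × γ => x.1 + x.2)
    (hD : ComputablePred fun x : α × β => x.2 ∈ D x.1)
    (hF : Computable fun x : α × β => F x.1 x.2) (hN : Computable N)
    (hlt : ∀ a, ∀ b ∈ D a, encode b < N a) : Computable fun a => ∑ b ∈ D a, F a b := by
  let G (a : α) (n : ℕ) : γ :=
    ((decode₂ β n).map fun b => if b ∈ D a then F a b else 0).getD 0
  have hG : Computable fun x : α × ℕ => G x.1 x.2 := by
    have hdecode : Computable (decode₂ β) := Primrec.decode₂.to_comp
    have hmem : ComputablePred fun x : (α × ℕ) × β => x.2 ∈ D x.1.1 :=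
      computablePred_comp (f := fun x : (α × ℕ) × β => (x.1.1, x.2)) hD (by fun_prop)
    exact Computable.option_getD (by fun_prop) (Computable.const 0)
  refine (computable_sum_range hadd hG hN).of_eq fun a => ?_
  have hzero : ∀ n ∈ Finset.range (N a), n ∉ (D a).image encode → G a n = 0 := by
    intro n _ hn
    cases hdec : decode₂ β n with
    | none => simp [G, hdec]
    | some b =>
      have hb : b ∉ D a := fun hb => hn (mem_decode₂.1 hdec ▸ Finset.mem_image_of_mem _ hb)
      simp [G, hdec, hb]
  have hsub : (D a).image encode ⊆ Finset.range (N a) :=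
    Finset.image_subset_iff.2 fun b hb => Finset.mem_range.2 (hlt a b hb)
  rw [← Finset.sum_subset hsub hzero, Finset.sum_image encode_injective.injOn]
  exact Finset.sum_congr rfl fun b hb => by simp [G, decode₂_encode, hb]

theorem exists_partrec_search {R : α → β → Prop}
    (hR : ComputablePred fun x : α × β => R x.1 x.2) :
    ∃ f : α →. β, Partrec f ∧ (∀ a, ∀ b ∈ f a, R a b) ∧ ∀ a, (∃ b, R a b) → (f a).Dom := by
  let F (a : α) (n : ℕ) : Option β := (decode n).bind fun b => if R a b then some b else none
  have hF : Computable₂ F := show Computable fun x : α × ℕ => F x.1 x.2 by fun_prop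
  refine ⟨fun a => Nat.rfindOpt (F a), Partrec.rfindOpt hF, fun a b hb => ?_, ?_⟩
  · obtain ⟨n, hn⟩ := Nat.rfindOpt_spec hb
    obtain ⟨b', -, hb'⟩ := Option.bind_eq_some_iff.1 hn
    obtain ⟨hab, heq⟩ := Option.ite_none_right_eq_some.1 hb'
    rwa [← Option.some.inj heq]
  · rintro a ⟨b, hab⟩
    exact Nat.rfindOpt_dom.2 ⟨encode b, b, by simp [F, hab]⟩

theorem cePred_exists {R : α → β → Prop} (hR : ComputablePred fun x : α × β => R x.1 x.2) :
    CEPred fun a => ∃ b, R a b := by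
  obtain ⟨f, hf, hsound, hdom⟩ := exists_partrec_search hR
  exact hf.dom_re.of_eq fun a => ⟨fun h => ⟨_, hsound a _ (Part.get_mem h)⟩, hdom a⟩

theorem computable_of_graph {f : α → β} (hf : ComputablePred fun x : α × β => f x.1 = x.2) :
    Computable f := by
  obtain ⟨g, hg, hsound, hdom⟩ := exists_partrec_search (R := fun a b => f a = b) hf
  refine hg.of_eq_tot fun a => ?_
  have hmem := Part.get_mem (hdom a ⟨f a, rfl⟩)
  rwa [← hsound a _ hmem] at hmem

theorem exists_partrec_of_graph {P : α → β → γ → Prop}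
    (hP : ComputablePred fun x : α × β × γ => P x.1 x.2.1 x.2.2)
    (hfun : ∀ {a b b' c c'}, P a b c → P a b' c' → b = b') :
    ∃ f : α →. β, Partrec f ∧ ∀ a b, b ∈ f a ↔ ∃ c, P a b c := by
  obtain ⟨g, hg, hsound, hdom⟩ := exists_partrec_search (R := fun a (x : β × γ) => P a x.1 x.2) hP
  refine ⟨fun a => (g a).map Prod.fst, hg.map (Computable.fst.comp Computable.snd), fun a b => ?_⟩
  rw [Part.mem_map_iff]
  constructor
  · rintro ⟨x, hx, rfl⟩
    exact ⟨x.2, hsound a x hx⟩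
  · rintro ⟨c, hc⟩
    have hmem := Part.get_mem (hdom a ⟨(b, c), hc⟩)
    exact ⟨_, hmem, hfun (hsound a _ hmem) hc⟩

theorem exists_stage_approximation {f : α →. β} (hf : Partrec f) :
    ∃ h : ℕ → α → Option β, (Computable fun x : ℕ × α => h x.1 x.2) ∧
      (∀ {s t a b}, s ≤ t → h s a = some b → h t a = some b) ∧
      (∀ {s a b}, h s a = some b → encode a < s) ∧
      ∀ {a b}, b ∈ f a ↔ ∃ s, h s a = some b := by
  obtain ⟨c, hc⟩ := Nat.Partrec.Code.exists_code.1 hf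
  have heval (a : α) : c.eval (encode a) = (f a).map encode := by rw [hc]; simp
  refine ⟨fun s a => (c.evaln s (encode a)).bind decode, ?_, ?_, ?_, ?_⟩
  · have hevaln : Computable fun x : ℕ × α => c.evaln x.1 (encode x.2) :=
      Nat.Partrec.Code.primrec_evaln.to_comp.comp
        (g := fun x : ℕ × α => ((x.1, c), encode x.2)) (by fun_prop)
    fun_prop
  · intro s t a b hst h
    obtain ⟨n, hn, hb⟩ := Option.bind_eq_some_iff.1 h
    exact Option.bind_eq_some_iff.2 ⟨n, Nat.Partrec.Code.evaln_mono hst hn, hb⟩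
  · intro s a b h
    obtain ⟨n, hn, -⟩ := Option.bind_eq_some_iff.1 h
    exact Nat.Partrec.Code.evaln_bound hn
  · intro a b
    have hmem : b ∈ f a ↔ encode b ∈ c.eval (encode a) := by
      rw [heval]; simp [Part.mem_map_iff]
    rw [hmem, Nat.Partrec.Code.evaln_complete]
    refine exists_congr fun s => ⟨fun hs => by simp [Option.mem_def.1 hs], fun hs => ?_⟩
    obtain ⟨n, hn, hb⟩ := Option.bind_eq_some_iff.1 hs
    have hn' := Nat.Partrec.Code.evaln_sound hn
    rw [heval, Part.mem_map_iff] at hn'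
    obtain ⟨b', -, rfl⟩ := hn'
    rw [encodek, Option.some.injEq] at hb
    rwa [← hb]

theorem CEPred.exists_stage_approximation {p : α → Prop} (hp : CEPred p) :
    ∃ h : ℕ → α → Prop, (ComputablePred fun x : ℕ × α => h x.1 x.2) ∧
      (∀ {s t a}, s ≤ t → h s a → h t a) ∧ ∀ {a}, p a ↔ ∃ s, h s a := by
  obtain ⟨h, hc, hmono, -, hspec⟩ := AR.exists_stage_approximation hp
  refine ⟨fun s a => h s a = some (), by fun_prop, hmono, fun {a} => ?_⟩
  rw [← hspec]
  simp [Part.mem_assert_iff]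

end Computability

section RationalComputability

open Encodable

variable {α : Type*} [Primcodable α]

theorem computable_of_encode_eq_count {code : α → ℕ}
    (hrange : ComputablePred (· ∈ Set.range code))
    (hcount : ∀ a, encode a = Nat.count (· ∈ Set.range code) (code a)) : Computable code := by
  have hcomp : Computable fun n => Nat.count (· ∈ Set.range code) n := by
    have hsum : Computable fun n =>
        ∑ k ∈ Finset.range n, if k ∈ Set.range code then 1 else 0 := by fun_prop
    exact hsum.of_eq fun n => by rw [Nat.count_eq_card_filter_range, Finset.card_filter]
  have hgraph : ComputablePred fun x : α × ℕ => x.2 ∈ Set.range code ∧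
      encode x.1 = Nat.count (· ∈ Set.range code) x.2 := by fun_prop
  refine computable_of_graph (hgraph.of_eq fun x => ⟨?_, fun hx => ?_⟩)
  · rintro ⟨⟨b, hb⟩, hx⟩
    rw [← hb, ← hcount b] at hx
    rw [← hb, encode_injective hx]
  · rw [← hx]
    exact ⟨⟨x.1, rfl⟩, hcount x.1⟩

/-- The code of a rational as a pair of numerator and denominator. The `Primcodable` instance
of `ℚ` numbers the rationals by the rank of this code among all codes. -/
def ratCode (q : ℚ) : ℕ := Nat.pair (encode q.num) q.den

theorem encode_rat_eq_count (q : ℚ) :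
    @encode ℚ Primcodable.toEncodable q = Nat.count (· ∈ Set.range ratCode) (ratCode q) := by
  have hirrel (p : ℕ → Prop) (i j : DecidablePred p) (n : ℕ) :
      @Nat.count p i n = @Nat.count p j n := by rw [Subsingleton.elim i j]
  exact Eq.trans (by rfl) (hirrel _
    (fun n => @Encodable.decidableRangeEncode ℚ Rat.instEncodable n) _ (ratCode q))

theorem natAbs_eq_encode (z : ℤ) : z.natAbs = (encode z + 1) / 2 := by
  cases z with
  | ofNat n => change n = (2 * n + 1) / 2; omega
  | negSucc n => change n + 1 = (2 * n + 1 + 1) / 2; omega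

theorem toNat_eq_encode (z : ℤ) : z.toNat = if encode z % 2 = 0 then encode z / 2 else 0 := by
  cases z with
  | ofNat n => change n = if 2 * n % 2 = 0 then 2 * n / 2 else 0; simp
  | negSucc n => change 0 = if (2 * n + 1) % 2 = 0 then _ else 0; simp

theorem mem_range_ratCode (n : ℕ) :
    n ∈ Set.range ratCode ↔ 0 < n.unpair.2 ∧ ((n.unpair.1 + 1) / 2).Coprime n.unpair.2 := by
  constructor
  · rintro ⟨q, rfl⟩
    simp only [ratCode, Nat.unpair_pair, ← natAbs_eq_encode]
    exact ⟨q.pos, q.reduced⟩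
  · rintro ⟨hpos, hcop⟩
    refine ⟨⟨Denumerable.ofNat ℤ n.unpair.1, n.unpair.2, hpos.ne', ?_⟩, ?_⟩
    · rwa [natAbs_eq_encode, Denumerable.encode_ofNat]
    · change Nat.pair (encode (Denumerable.ofNat ℤ n.unpair.1)) n.unpair.2 = n
      rw [Denumerable.encode_ofNat, Nat.pair_unpair]

@[fun_prop]
theorem computablePred_nat_coprime {f g : α → ℕ} (hf : Computable f) (hg : Computable g) :
    ComputablePred fun a => (f a).Coprime (g a) := by
  have hbounded : ComputablePred fun a =>
      ∀ k < f a + g a + 1, f a % k = 0 ∧ g a % k = 0 → k = 1 := by fun_prop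
  refine hbounded.of_eq fun a => ⟨fun h => h _ (Nat.lt_succ_of_le ?_) ⟨?_, ?_⟩, ?_⟩
  · rcases Nat.eq_zero_or_pos (f a) with hzero | hpos
    · simp [hzero]
    · exact (Nat.gcd_le_left _ hpos).trans (Nat.le_add_right _ _)
  · exact Nat.mod_eq_zero_of_dvd (Nat.gcd_dvd_left _ _)
  · exact Nat.mod_eq_zero_of_dvd (Nat.gcd_dvd_right _ _)
  · exact fun h k _ hk => Nat.eq_one_of_dvd_coprimes h (Nat.dvd_of_mod_eq_zero hk.1)
      (Nat.dvd_of_mod_eq_zero hk.2)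

theorem computable_ratCode : Computable ratCode := by
  refine computable_of_encode_eq_count (ComputablePred.of_eq ?_ fun n =>
    (mem_range_ratCode n).symm) encode_rat_eq_count
  fun_prop

@[fun_prop]
theorem computable_rat_den : Computable Rat.den := by
  have hcode := computable_ratCode
  have hcomp : Computable fun q => (ratCode q).unpair.2 := by fun_prop
  exact hcomp.of_eq fun q => by simp [ratCode]

theorem computable_encode_rat_num : Computable fun q : ℚ => encode q.num := by
  have hcode := computable_ratCode
  have hcomp : Computable fun q => (ratCode q).unpair.1 := by fun_prop
  exact hcomp.of_eq fun q => by simp [ratCode]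

/-- The positive part of the numerator of a rational. -/
def ratPos (q : ℚ) : ℕ := q.num.toNat

/-- The negative part of the numerator of a rational. -/
def ratNeg (q : ℚ) : ℕ := q.num.natAbs - q.num.toNat

@[fun_prop]
theorem computable_ratPos : Computable ratPos := by
  have hnum := computable_encode_rat_num
  refine Computable.of_eq ?_ fun q => (toNat_eq_encode _).symm
  fun_prop

@[fun_prop]
theorem computable_ratNeg : Computable ratNeg := by
  have hnum := computable_encode_rat_num
  have hcomp : Computable fun q => (encode q.num + 1) / 2 - ratPos q := by fun_prop
  exact hcomp.of_eq fun q => by rw [ratNeg, natAbs_eq_encode, ratPos]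

theorem ratPos_sub_ratNeg_div_den (q : ℚ) : ((ratPos q : ℚ) - ratNeg q) / q.den = q := by
  have hnum : ((ratPos q : ℤ) - ratNeg q) = q.num := by unfold ratPos ratNeg; omega
  have hcast : ((ratPos q : ℚ) - ratNeg q) = q.num := by exact_mod_cast hnum
  rw [hcast, Rat.num_div_den]

theorem natCast_sub_div_lt_iff {a b c d e f : ℕ} (hc : 0 < c) (hf : 0 < f) :
    ((a : ℚ) - b) / c < ((d : ℚ) - e) / f ↔ a * f + e * c < d * c + b * f := by
  rw [div_lt_div_iff₀ (by positivity) (by positivity), ← Nat.cast_lt (α := ℚ)]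
  push_cast
  constructor <;> intro h <;> linarith

@[fun_prop]
theorem computablePred_rat_lt {f g : α → ℚ} (hf : Computable f) (hg : Computable g) :
    ComputablePred fun a => f a < g a := by
  have hparts : ComputablePred fun a =>
      ratPos (f a) * (g a).den + ratNeg (g a) * (f a).den <
        ratPos (g a) * (f a).den + ratNeg (f a) * (g a).den := by fun_prop
  refine hparts.of_eq fun a => ?_
  rw [← natCast_sub_div_lt_iff (f a).pos (g a).pos, ratPos_sub_ratNeg_div_den,
    ratPos_sub_ratNeg_div_den]

@[fun_prop]
theorem computablePred_rat_le {f g : α → ℚ} (hf : Computable f) (hg : Computable g) :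
    ComputablePred fun a => f a ≤ g a :=
  (computablePred_rat_lt hg hf).not.of_eq fun _ => not_lt

theorem computable_natCast_sub_div {f g h : α → ℕ} (hf : Computable f) (hg : Computable g)
    (hh : Computable h) (hpos : ∀ a, 0 < h a) :
    Computable fun a => ((f a : ℚ) - g a) / h a := by
  have hparts : ComputablePred fun x : α × ℚ =>
      ¬ f x.1 * x.2.den + ratNeg x.2 * h x.1 < ratPos x.2 * h x.1 + g x.1 * x.2.den ∧
      ¬ ratPos x.2 * h x.1 + g x.1 * x.2.den < f x.1 * x.2.den + ratNeg x.2 * h x.1 := by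
    fun_prop
  refine computable_of_graph (hparts.of_eq fun x => ?_)
  rw [← natCast_sub_div_lt_iff (hpos _) x.2.pos, ← natCast_sub_div_lt_iff x.2.pos (hpos _),
    ratPos_sub_ratNeg_div_den, not_lt, not_lt, ← le_antisymm_iff, eq_comm]

@[fun_prop]
theorem computable_rat_add {f g : α → ℚ} (hf : Computable f) (hg : Computable g) :
    Computable fun a => f a + g a := by
  refine (computable_natCast_sub_div
    (f := fun a => ratPos (f a) * (g a).den + ratPos (g a) * (f a).den)
    (g := fun a => ratNeg (f a) * (g a).den + ratNeg (g a) * (f a).den)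
    (h := fun a => (f a).den * (g a).den) (by fun_prop) (by fun_prop) (by fun_prop)
    fun a => Nat.mul_pos (f a).pos (g a).pos).of_eq fun a => ?_
  conv_rhs => rw [← ratPos_sub_ratNeg_div_den (f a), ← ratPos_sub_ratNeg_div_den (g a)]
  push_cast
  field_simp
  ring

@[fun_prop]
theorem computable_rat_mul {f g : α → ℚ} (hf : Computable f) (hg : Computable g) :
    Computable fun a => f a * g a := by
  refine (computable_natCast_sub_div
    (f := fun a => ratPos (f a) * ratPos (g a) + ratNeg (f a) * ratNeg (g a))
    (g := fun a => ratPos (f a) * ratNeg (g a) + ratNeg (f a) * ratPos (g a))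
    (h := fun a => (f a).den * (g a).den) (by fun_prop) (by fun_prop) (by fun_prop)
    fun a => Nat.mul_pos (f a).pos (g a).pos).of_eq fun a => ?_
  conv_rhs => rw [← ratPos_sub_ratNeg_div_den (f a), ← ratPos_sub_ratNeg_div_den (g a)]
  push_cast
  field_simp
  ring

@[fun_prop]
theorem computable_rat_sub {f g : α → ℚ} (hf : Computable f) (hg : Computable g) :
    Computable fun a => f a - g a := by
  have hcomp : Computable fun a => f a + -1 * g a := by fun_prop
  exact hcomp.of_eq fun a => by ring

@[fun_prop]
theorem computable_rat_pow {f : α → ℚ} {g : α → ℕ} (hf : Computable f) (hg : Computable g) :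
    Computable fun a => f a ^ g a := by
  have hrec : Computable fun a => (Nat.rec 1 (fun _ s => s * f a) (g a) : ℚ) :=
    Computable.nat_rec (h := fun a (x : ℕ × ℚ) => x.2 * f a) hg (Computable.const 1)
      (show Computable fun y : α × ℕ × ℚ => y.2.2 * f y.1 by fun_prop)
  refine hrec.of_eq fun a => ?_
  induction g a with
  | zero => simp
  | succ n ih => rw [pow_succ, ← ih]

@[fun_prop]
theorem computable_rat_natCast {f : α → ℕ} (hf : Computable f) :
    Computable fun a => (f a : ℚ) :=
  (computable_natCast_sub_div hf (Computable.const 0) (Computable.const 1) fun _ => one_pos).of_eq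
    fun a => by simp

@[fun_prop]
theorem computable_rat_natFloor {f : α → ℚ} (hf : Computable f) :
    Computable fun a => ⌊f a⌋₊ := by
  have hcomp : Computable fun a => ratPos (f a) / (f a).den := by fun_prop
  refine hcomp.of_eq fun a => ?_
  rcases le_total 0 (f a) with hnonneg | hnonpos
  · have hnum : ((ratPos (f a) : ℕ) : ℤ) = (f a).num :=
      Int.toNat_of_nonneg (Rat.num_nonneg.2 hnonneg)
    conv_rhs => rw [← Rat.num_div_den (f a), ← hnum, Int.cast_natCast, Nat.floor_div_eq_div]
  · rw [ratPos, Int.toNat_of_nonpos (Rat.num_nonpos.2 hnonpos), Nat.zero_div,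
      Nat.floor_of_nonpos hnonpos]

end RationalComputability

section BinaryStrings

/-- The natural number with binary representation `σ`, most significant bit first. -/
def val (σ : Str) : ℕ := σ.foldl (fun v b => 2 * v + b.toNat) 0

theorem val_concat (σ : Str) (b : Bool) : val (σ ++ [b]) = 2 * val σ + b.toNat := by
  simp [val, List.foldl_append]

theorem val_append (σ τ : Str) : val (σ ++ τ) = val σ * 2 ^ τ.length + val τ := by
  induction τ using List.reverseRecOn with
  | nil => simp [val]
  | append_singleton τ b ih =>
    rw [← List.append_assoc, val_concat, ih, val_concat, List.length_append,
      List.length_singleton, pow_succ]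
    ring

theorem val_lt_two_pow (σ : Str) : val σ < 2 ^ σ.length := by
  induction σ using List.reverseRecOn with
  | nil => simp [val]
  | append_singleton τ b ih =>
    rw [val_concat, List.length_append, List.length_singleton, pow_succ]
    have := Bool.toNat_le b
    omega

theorem eq_of_length_eq_of_val_eq {σ τ : Str} (hlen : σ.length = τ.length)
    (hval : val σ = val τ) : σ = τ := by
  induction σ using List.reverseRecOn generalizing τ with
  | nil => exact (List.length_eq_zero_iff.1 hlen.symm).symm
  | append_singleton σ b ih =>
    rcases List.eq_nil_or_concat τ with rfl | ⟨τ', c, rfl⟩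
    · simp at hlen
    · rw [List.concat_eq_append] at *
      rw [val_concat, val_concat] at hval
      have hb := Bool.toNat_le b
      have hc := Bool.toNat_le c
      rw [ih (by simpa using hlen) (by omega)]
      cases b <;> cases c <;> simp_all <;> omega

/-- The binary string of length `n` representing `v` modulo `2 ^ n`. -/
def strOf : ℕ → ℕ → Str
  | 0, _ => []
  | n + 1, v => strOf n (v / 2) ++ [decide (v % 2 = 1)]

@[simp]
theorem length_strOf (n v : ℕ) : (strOf n v).length = n := by
  induction n generalizing v with
  | zero => rfl
  | succ n ih => simp [strOf, ih]

theorem val_strOf (n v : ℕ) : val (strOf n v) = v % 2 ^ n := by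
  induction n generalizing v with
  | zero => simp [strOf, val, Nat.mod_one]
  | succ n ih =>
    rw [strOf, val_concat, ih, pow_succ', Nat.mod_mul]
    rcases Nat.mod_two_eq_zero_or_one v with hv | hv <;> simp [hv, add_comm]

theorem strOf_length_val (σ : Str) : strOf σ.length (val σ) = σ :=
  eq_of_length_eq_of_val_eq (length_strOf _ _)
    ((val_strOf _ _).trans (Nat.mod_eq_of_lt (val_lt_two_pow σ)))

@[fun_prop]
theorem computable_val : Computable val :=
  (Primrec.list_foldl (f := fun σ : Str => σ) (g := fun _ => 0)
    (h := fun _ (x : ℕ × Bool) => 2 * x.1 + x.2.toNat) Primrec.id (Primrec.const 0)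
    (Primrec.nat_add.comp (Primrec.nat_mul.comp (Primrec.const 2) (Primrec.fst.comp Primrec.snd))
      ((Primrec.dom_bool _).comp (Primrec.snd.comp Primrec.snd)))).to_comp

@[fun_prop]
theorem computable_strOf {α : Type*} [Primcodable α] {f g : α → ℕ} (hf : Computable f)
    (hg : Computable g) : Computable fun a => strOf (f a) (g a) := by
  have hgraph : ComputablePred fun x : α × Str =>
      x.2.length = f x.1 ∧ val x.2 = g x.1 % 2 ^ f x.1 := by fun_prop
  refine computable_of_graph (hgraph.of_eq fun x => ⟨fun h => ?_, fun h => ?_⟩)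
  · exact eq_of_length_eq_of_val_eq (by simp [h.1]) (by rw [val_strOf, h.2])
  · simp [← h, val_strOf]

/-- The left endpoint of the interval of the reals with a binary expansion extending `σ`. -/
def leftEnd (σ : Str) : ℚ := val σ * 2⁻¹ ^ σ.length

/-- The right endpoint of the interval of the reals with a binary expansion extending `σ`. -/
def rightEnd (σ : Str) : ℚ := leftEnd σ + 2⁻¹ ^ σ.length

@[fun_prop]
theorem computable_leftEnd : Computable leftEnd := by unfold leftEnd; fun_prop

@[fun_prop]
theorem computable_rightEnd : Computable rightEnd := by unfold rightEnd; fun_prop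

theorem leftEnd_nonneg (σ : Str) : 0 ≤ leftEnd σ := by unfold leftEnd; positivity

theorem leftEnd_lt_rightEnd (σ : Str) : leftEnd σ < rightEnd σ :=
  lt_add_of_pos_right _ (by positivity)

theorem rightEnd_eq (σ : Str) : rightEnd σ = (val σ + 1) * 2⁻¹ ^ σ.length := by
  rw [rightEnd, leftEnd]; ring

theorem rightEnd_le_one (σ : Str) : rightEnd σ ≤ 1 := by
  have hval : (val σ : ℚ) + 1 ≤ 2 ^ σ.length := by exact_mod_cast val_lt_two_pow σ
  calc rightEnd σ ≤ 2 ^ σ.length * 2⁻¹ ^ σ.length := by rw [rightEnd_eq]; gcongr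
    _ = 1 := by rw [← mul_pow]; norm_num

theorem leftEnd_append (σ τ : Str) :
    leftEnd (σ ++ τ) = leftEnd σ + 2⁻¹ ^ σ.length * leftEnd τ := by
  simp only [leftEnd, val_append, List.length_append, pow_add, inv_pow]
  push_cast
  field_simp

theorem rightEnd_append (σ τ : Str) :
    rightEnd (σ ++ τ) = leftEnd σ + 2⁻¹ ^ σ.length * rightEnd τ := by
  rw [rightEnd, leftEnd_append, rightEnd, List.length_append, pow_add]; ring

theorem prefix_of_overlap {σ τ : Str} (hlen : σ.length ≤ τ.length)
    (hστ : leftEnd σ < rightEnd τ) (hτσ : leftEnd τ < rightEnd σ) : σ <+: τ := by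
  obtain ⟨ρ, ρ', rfl, hρ⟩ : ∃ ρ ρ', τ = ρ ++ ρ' ∧ σ.length = ρ.length :=
    ⟨τ.take σ.length, τ.drop σ.length, by simp, by simp [hlen]⟩
  have hpos : (0 : ℚ) < 2⁻¹ ^ ρ.length := by positivity
  have hleft : leftEnd ρ ≤ leftEnd (ρ ++ ρ') := by
    rw [leftEnd_append]
    exact le_add_of_nonneg_right (mul_nonneg hpos.le (leftEnd_nonneg _))
  have hright : rightEnd (ρ ++ ρ') ≤ rightEnd ρ := by
    rw [rightEnd_append, rightEnd]
    exact add_le_add_right (mul_le_of_le_one_right hpos.le (rightEnd_le_one _)) _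
  have hσρ := hστ.trans_le hright
  have hρσ := hleft.trans_lt hτσ
  rw [leftEnd, rightEnd_eq, hρ, mul_lt_mul_iff_left₀ hpos] at hσρ hρσ
  norm_cast at hσρ hρσ
  rw [eq_of_length_eq_of_val_eq hρ (by omega)]
  exact List.prefix_append _ _

theorem prefix_iff_leftEnd_le_and_rightEnd_le {σ τ : Str} :
    σ <+: τ ↔ leftEnd σ ≤ leftEnd τ ∧ rightEnd τ ≤ rightEnd σ := by
  constructor
  · rintro ⟨ρ, rfl⟩
    have hpos : (0 : ℚ) ≤ 2⁻¹ ^ σ.length := by positivity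
    rw [leftEnd_append, rightEnd_append, rightEnd]
    exact ⟨le_add_of_nonneg_right (mul_nonneg hpos (leftEnd_nonneg _)),
      add_le_add_right (mul_le_of_le_one_right hpos (rightEnd_le_one _)) _⟩
  · rintro ⟨hleft, hright⟩
    have hpow : (2 : ℚ)⁻¹ ^ τ.length ≤ 2⁻¹ ^ σ.length := by
      unfold rightEnd at hright; linarith
    have hlen := (pow_le_pow_iff_right_of_lt_one₀ (by norm_num) (by norm_num)).1 hpow
    exact prefix_of_overlap hlen (hleft.trans_lt (leftEnd_lt_rightEnd τ))
      ((leftEnd_lt_rightEnd τ).trans_le hright)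

/-- Two strings are comparable if one of them extends the other. -/
def Comparable (σ τ : Str) : Prop := σ <+: τ ∨ τ <+: σ

theorem comparable_comm {σ τ : Str} : Comparable σ τ ↔ Comparable τ σ := or_comm

theorem PrefixFree.eq_of_comparable {S : Set Str} (hS : PrefixFree S) {σ τ : Str} (hσ : σ ∈ S)
    (hτ : τ ∈ S) (h : Comparable σ τ) : σ = τ :=
  h.elim (hS σ hσ τ hτ) fun h => (hS τ hτ σ hσ h).symm

theorem not_comparable_of_rightEnd_le {σ τ : Str} (h : rightEnd σ ≤ leftEnd τ) :
    ¬ Comparable σ τ := by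
  have hσ := leftEnd_lt_rightEnd σ
  have hτ := leftEnd_lt_rightEnd τ
  rintro (hpre | hpre) <;> rw [prefix_iff_leftEnd_le_and_rightEnd_le] at hpre <;> linarith

variable {α : Type*} [Primcodable α]

@[fun_prop]
theorem computablePred_prefix {f g : α → Str} (hf : Computable f) (hg : Computable g) :
    ComputablePred fun a => f a <+: g a := by
  simp only [prefix_iff_leftEnd_le_and_rightEnd_le]
  fun_prop

@[fun_prop]
theorem computablePred_comparable {f g : α → Str} (hf : Computable f) (hg : Computable g) :
    ComputablePred fun a => Comparable (f a) (g a) := by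
  unfold Comparable; fun_prop

end BinaryStrings

section BinaryExpansions

theorem pre_succ (A : Seq) (n : ℕ) : pre A (n + 1) = pre A n ++ [A n] := by
  rw [pre, pre, List.ofFn_succ_last]
  simp

@[simp]
theorem length_pre (A : Seq) (n : ℕ) : (pre A n).length = n := List.length_ofFn

theorem pre_prefix_pre (A : Seq) {m n : ℕ} (h : m ≤ n) : pre A m <+: pre A n := by
  induction h with
  | refl => exact List.prefix_rfl
  | step _ ih => rw [pre_succ]; exact ih.trans (List.prefix_append _ _)

theorem summable_binExp (A : Seq) : Summable fun n => cond (A n) ((2 : ℝ)⁻¹ ^ (n + 1)) 0 := by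
  refine Summable.of_nonneg_of_le (fun n => ?_) (fun n => ?_)
    ((summable_geometric_of_lt_one (r := (2 : ℝ)⁻¹) (by norm_num) (by norm_num)).mul_left 2⁻¹)
  all_goals cases A n <;> simp [pow_succ', -inv_pow]

theorem sum_range_eq_leftEnd_pre (A : Seq) (n : ℕ) :
    ∑ k ∈ Finset.range n, cond (A k) ((2 : ℝ)⁻¹ ^ (k + 1)) 0 = leftEnd (pre A n) := by
  induction n with
  | zero => simp [leftEnd, pre, val]
  | succ n ih =>
    rw [Finset.sum_range_succ, ih, pre_succ, leftEnd, leftEnd, val_concat]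
    simp only [length_pre, List.length_append, List.length_singleton, pow_succ]
    cases A n <;> simp <;> ring

theorem leftEnd_pre_le_binExp (A : Seq) (n : ℕ) : leftEnd (pre A n) ≤ binExp A := by
  rw [← sum_range_eq_leftEnd_pre]
  refine (summable_binExp A).sum_le_tsum _ fun k _ => ?_
  cases A k <;> simp

theorem binExp_le_rightEnd_pre (A : Seq) (n : ℕ) : binExp A ≤ rightEnd (pre A n) := by
  have hgeom : HasSum (fun k : ℕ => (2 : ℝ)⁻¹ ^ (n + 1) * 2⁻¹ ^ k) (2⁻¹ ^ n) := by
    have h := (hasSum_geometric_of_lt_one (r := (2 : ℝ)⁻¹) (by norm_num) (by norm_num)).mul_left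
      ((2 : ℝ)⁻¹ ^ (n + 1))
    rwa [pow_succ, mul_assoc, show (2 : ℝ)⁻¹ * (1 - 2⁻¹)⁻¹ = 1 by norm_num, mul_one,
      ← pow_succ] at h
  have htail : ∑' k, cond (A (k + n)) ((2 : ℝ)⁻¹ ^ (k + n + 1)) 0 ≤ 2⁻¹ ^ n := by
    rw [← hgeom.tsum_eq]
    refine ((summable_nat_add_iff n).2 (summable_binExp A)).tsum_le_tsum (fun k => ?_)
      hgeom.summable
    rw [show k + n + 1 = n + 1 + k by ring, pow_add]
    cases A (k + n) <;> simp
  rw [binExp, ← (summable_binExp A).sum_add_tsum_nat_add n, sum_range_eq_leftEnd_pre, rightEnd,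
    length_pre]
  push_cast
  gcongr

theorem exists_binExp_eq {x : ℝ} (hx : x ∈ Set.Icc 0 1) : ∃ A : Seq, binExp A = x := by
  obtain ⟨d, -, hd⟩ := Real.ofDigits_SurjOn (b := 2) (by norm_num) hx
  refine ⟨fun n => decide (d n = 1), ?_⟩
  rw [← hd, binExp, Real.ofDigits]
  refine tsum_congr fun n => ?_
  rw [Real.ofDigitsTerm]
  rcases (by omega : d n = 0 ∨ d n = 1) with hdn | hdn <;> simp [hdn]

end BinaryExpansions

section CantorMeasure

open MeasureTheory Filter

theorem measurableSet_cyl (σ : Str) : MeasurableSet (cyl σ) := by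
  have hrestrict : Measurable fun (A : Seq) (i : Fin σ.length) => A i :=
    measurable_pi_lambda _ fun _ => measurable_pi_apply _
  exact hrestrict (Set.toFinite {f : Fin σ.length → Bool | List.ofFn f = σ}).measurableSet

theorem mem_cyl_pre (A : Seq) (n : ℕ) : A ∈ cyl (pre A n) := by
  simp [cyl]

theorem comparable_of_mem_cyl {σ τ : Str} {A : Seq} (hσ : A ∈ cyl σ) (hτ : A ∈ cyl τ) :
    Comparable σ τ := by
  rw [← show pre A σ.length = σ from hσ, ← show pre A τ.length = τ from hτ]
  exact (le_total σ.length τ.length).imp (pre_prefix_pre A) (pre_prefix_pre A)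

theorem binExp_mem_Icc_of_mem_cyl {σ : Str} {A : Seq} (h : A ∈ cyl σ) :
    binExp A ∈ Set.Icc (leftEnd σ : ℝ) (rightEnd σ) := by
  rw [← show pre A σ.length = σ from h]
  exact ⟨leftEnd_pre_le_binExp A _, binExp_le_rightEnd_pre A _⟩

theorem exists_pre_subinterval {A : Seq} {l u : ℝ} (h : binExp A ∈ Set.Ioo l u) :
    ∃ n, l ≤ leftEnd (pre A n) ∧ rightEnd (pre A n) ≤ u := by
  obtain ⟨n, hn⟩ := exists_pow_lt_of_lt_one (lt_min (sub_pos.2 h.1) (sub_pos.2 h.2))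
    (show (2 : ℝ)⁻¹ < 1 by norm_num)
  rw [lt_min_iff] at hn
  have hleft := leftEnd_pre_le_binExp A n
  have hright := binExp_le_rightEnd_pre A n
  have hlen : (rightEnd (pre A n) : ℝ) = leftEnd (pre A n) + 2⁻¹ ^ n := by
    rw [rightEnd, length_pre]; push_cast; rfl
  exact ⟨n, by linarith, by linarith⟩

theorem card_Icc_ceil_floor_le {x y : ℝ} (h : x ≤ y + 1) :
    ((Finset.Icc ⌈x⌉ ⌊y⌋).card : ℝ) ≤ y + 1 - x := by
  have hle : ((⌊y⌋ + 1 - ⌈x⌉ : ℤ) : ℝ) ≤ y + 1 - x := by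
    push_cast
    linarith [Int.floor_le y, Int.le_ceil x]
  rw [Int.card_Icc, ← Int.cast_natCast, Int.toNat_eq_max, Int.cast_max, Int.cast_zero]
  exact max_le hle (sub_nonneg.2 h)

variable {μ : Measure Seq}

theorem FairCoin.measure_univ (hμ : FairCoin μ) : μ Set.univ = 1 := by
  simpa [cyl, pre] using hμ []

theorem FairCoin.measure_Icc_le_add (hμ : FairCoin μ) {l u : ℝ} (hlu : l ≤ u) (n : ℕ) :
    μ (binExp ⁻¹' Set.Icc l u) ≤ ENNReal.ofReal (u - l + 2 * 2⁻¹ ^ n) := by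
  have hpow : (2 : ℝ) ^ n * 2⁻¹ ^ n = 1 := by rw [← mul_pow]; norm_num
  let I : Finset ℤ := Finset.Icc ⌈l * 2 ^ n - 1⌉ ⌊u * 2 ^ n⌋
  have hcover : binExp ⁻¹' Set.Icc l u ⊆ ⋃ v ∈ I, cyl (strOf n v.toNat) := by
    intro A hA
    have hleft := (leftEnd_pre_le_binExp A n).trans hA.2
    have hright := hA.1.trans (binExp_le_rightEnd_pre A n)
    rw [leftEnd, length_pre] at hleft
    rw [rightEnd_eq, length_pre] at hright
    push_cast at hleft hright
    refine Set.mem_iUnion₂.2 ⟨val (pre A n), Finset.mem_Icc.2 ⟨?_, ?_⟩, ?_⟩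
    · rw [Int.ceil_le, Int.cast_natCast]
      nlinarith [pow_pos (two_pos (α := ℝ)) n]
    · rw [Int.le_floor, Int.cast_natCast]
      nlinarith [pow_pos (two_pos (α := ℝ)) n]
    · have hstr := strOf_length_val (pre A n)
      rw [length_pre] at hstr
      rw [Int.toNat_natCast, hstr]
      exact mem_cyl_pre A n
  have hcard : (I.card : ℝ) ≤ u * 2 ^ n + 1 - (l * 2 ^ n - 1) :=
    card_Icc_ceil_floor_le (by nlinarith [pow_pos (two_pos (α := ℝ)) n])
  calc μ (binExp ⁻¹' Set.Icc l u) ≤ ∑ v ∈ I, μ (cyl (strOf n v.toNat)) :=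
        (measure_mono hcover).trans (measure_biUnion_finset_le _ _)
    _ = ENNReal.ofReal (I.card * 2⁻¹ ^ n) := by
        simp only [hμ _, length_strOf, Finset.sum_const, nsmul_eq_mul]
        rw [ENNReal.ofReal_mul (by positivity), ENNReal.ofReal_natCast,
          ENNReal.ofReal_pow (by positivity), ENNReal.ofReal_inv_of_pos (by norm_num)]
        simp
    _ ≤ ENNReal.ofReal ((u * 2 ^ n + 1 - (l * 2 ^ n - 1)) * 2⁻¹ ^ n) := by gcongr
    _ = ENNReal.ofReal (u - l + 2 * 2⁻¹ ^ n) := by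
        congr 1
        linear_combination (u - l) * hpow

theorem FairCoin.measure_Icc_le (hμ : FairCoin μ) {l u : ℝ} (hlu : l ≤ u) :
    μ (binExp ⁻¹' Set.Icc l u) ≤ ENNReal.ofReal (u - l) := by
  have hlim : Tendsto (fun n : ℕ => u - l + 2 * (2 : ℝ)⁻¹ ^ n) atTop (nhds (u - l + 2 * 0)) :=
    ((tendsto_pow_atTop_nhds_zero_of_lt_one (by norm_num) (by norm_num)).const_mul 2).const_add _
  rw [mul_zero, add_zero] at hlim
  exact ge_of_tendsto' (ENNReal.tendsto_ofReal hlim) (hμ.measure_Icc_le_add hlu)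

/-- The total weight `∑ 2 ^ (-|σ|)` of a set of strings, with values in `[0, ∞]` so that no
summability has to be checked. -/
noncomputable def weight (S : Set Str) : ℝ≥0∞ := ∑' σ : S, 2⁻¹ ^ (σ : Str).length

theorem FairCoin.weight_le_measure (hμ : FairCoin μ) {S : Set Str} (hS : PrefixFree S)
    {C : Set Seq} (hC : ∀ σ ∈ S, cyl σ ⊆ C) : weight S ≤ μ C := by
  have hdisj : Pairwise (Function.onFun Disjoint fun σ : S => cyl σ) := fun σ τ hne =>
    Set.disjoint_left.2 fun A hσ hτ =>
      hne (Subtype.ext (hS.eq_of_comparable σ.2 τ.2 (comparable_of_mem_cyl hσ hτ)))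
  calc weight S = ∑' σ : S, μ (cyl σ) := tsum_congr fun σ => (hμ _).symm
    _ = μ (⋃ σ : S, cyl σ) := (measure_iUnion hdisj fun σ => measurableSet_cyl _).symm
    _ ≤ μ C := measure_mono (Set.iUnion_subset fun σ => hC _ σ.2)

theorem FairCoin.weight_le_one (hμ : FairCoin μ) {S : Set Str} (hS : PrefixFree S) :
    weight S ≤ 1 :=
  (hμ.weight_le_measure hS fun _ _ => Set.subset_univ _).trans_eq hμ.measure_univ

end CantorMeasure

section LeftCE

open Filter

variable {G : ℕ → ℚ} {x : ℝ}

theorem lt_of_strictMono_tendsto (hG : StrictMono G)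
    (hlim : Tendsto (fun n => (G n : ℝ)) atTop (nhds x)) (n : ℕ) : (G n : ℝ) < x := by
  have hmono : StrictMono fun n => (G n : ℝ) := Rat.cast_strictMono.comp hG
  exact (hmono n.lt_succ_self).trans_le (hmono.monotone.ge_of_tendsto hlim (n + 1))

theorem strictMono_sub_two_inv_pow (hG : Monotone G) : StrictMono fun s => G s - 2⁻¹ ^ s := by
  intro s t hst
  have hle := hG hst.le
  have hlt : (2 : ℚ)⁻¹ ^ t < 2⁻¹ ^ s :=
    pow_lt_pow_right_of_lt_one₀ (by norm_num) (by norm_num) hst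
  linarith

theorem tendsto_sub_two_inv_pow (hlim : Tendsto (fun s => (G s : ℝ)) atTop (nhds x)) :
    Tendsto (fun s => ((G s - 2⁻¹ ^ s : ℚ) : ℝ)) atTop (nhds x) := by
  have hpow : Tendsto (fun s : ℕ => (2 : ℝ)⁻¹ ^ s) atTop (nhds 0) :=
    tendsto_pow_atTop_nhds_zero_of_lt_one (by norm_num) (by norm_num)
  have hsub := hlim.sub hpow
  rw [sub_zero] at hsub
  exact hsub.congr fun s => by push_cast; rfl

theorem LeftCE.of_monotone (hG : Computable G) (hmono : Monotone G)
    (hlim : Tendsto (fun s => (G s : ℝ)) atTop (nhds x)) : LeftCE x :=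
  ⟨fun s => G s - 2⁻¹ ^ s, by fun_prop, strictMono_sub_two_inv_pow hmono,
    tendsto_sub_two_inv_pow hlim⟩

end LeftCE

section RandomToOmegaLike

open MeasureTheory Filter

/-- The state `(t, r)` of the Kučera–Slaman strategy after `s` stages: whenever `a` has reached
the target `r`, the growth of `b` since its value `t` at the last such moment, scaled by `ε`, is
added to the current value of `a` to form a new target. -/
def copyState (a b : ℕ → ℚ) (ε : ℚ) : ℕ → ℚ × ℚ
  | 0 => (b 0 - 1, a 0)
  | s + 1 => if (copyState a b ε s).2 ≤ a s then
      (b s, a s + ε * (b s - (copyState a b ε s).1)) else copyState a b ε s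

/-- The strings whose cylinders cover the interval of length twice the increase of the target,
to the right of `a s`, at some stage `s` at which the target has been reached. -/
def copyTest (a b : ℕ → ℚ) (ε : ℚ) : Set Str :=
  {σ | ∃ s, (copyState a b ε s).2 ≤ a s ∧ a s ≤ leftEnd σ ∧
    rightEnd σ ≤ a s + 2 * ε * (b s - (copyState a b ε s).1)}

section Strategy

variable {a b : ℕ → ℚ} {ε : ℚ} {α β : ℝ}

theorem computable_copyState {ι : Type*} [Primcodable ι] {ε : ι → ℚ} {s : ι → ℕ}
    (ha : Computable a) (hb : Computable b) (hε : Computable ε) (hs : Computable s) :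
    Computable fun i => copyState a b (ε i) (s i) := by
  have hstate : Computable fun x : ℚ × ℕ => copyState a b x.1 x.2 := by
    refine computable_of_succ_eq (step := fun ε x => if x.2.2 ≤ a x.1 then
      (b x.1, a x.1 + ε * (b x.1 - x.2.1)) else x.2) (Computable.const _) (by fun_prop)
      fun ε s => ?_
    rw [copyState]
  exact Computable.comp (f := fun x : ℚ × ℕ => copyState a b x.1 x.2) (g := fun i => (ε i, s i))
    hstate (hε.pair hs)

theorem cePred_copyTest (ha : Computable a) (hb : Computable b) {ε : ℕ → ℚ} (hε : Computable ε) :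
    CEPred fun x : ℕ × Str => x.2 ∈ copyTest a b (ε x.1) := by
  have hstate : Computable fun y : (ℕ × Str) × ℕ => copyState a b (ε y.1.1) y.2 :=
    computable_copyState ha hb (by fun_prop) (by fun_prop)
  have hstage : ComputablePred fun y : (ℕ × Str) × ℕ =>
      (copyState a b (ε y.1.1) y.2).2 ≤ a y.2 ∧ a y.2 ≤ leftEnd y.1.2 ∧
        rightEnd y.1.2 ≤
          a y.2 + 2 * ε y.1.1 * (b y.2 - (copyState a b (ε y.1.1) y.2).1) := by
    fun_prop
  exact cePred_exists hstage

theorem copyState_succ_of_le {s : ℕ} (h : (copyState a b ε s).2 ≤ a s) :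
    copyState a b ε (s + 1) = (b s, a s + ε * (b s - (copyState a b ε s).1)) := by
  rw [copyState, if_pos h]

theorem copyState_succ_of_lt {s : ℕ} (h : a s < (copyState a b ε s).2) :
    copyState a b ε (s + 1) = copyState a b ε s := by
  rw [copyState, if_neg h.not_ge]

theorem copyState_fst_lt (hb : StrictMono b) (s : ℕ) : (copyState a b ε s).1 < b s := by
  induction s with
  | zero => simp [copyState]
  | succ s ih =>
    have hstep := hb s.lt_succ_self
    rcases le_or_gt (copyState a b ε s).2 (a s) with hreached | hnot
    · rwa [copyState_succ_of_le hreached]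
    · rw [copyState_succ_of_lt hnot]; exact ih.trans hstep

theorem monotone_copyState_fst (hb : StrictMono b) : Monotone fun s => (copyState a b ε s).1 := by
  refine monotone_nat_of_le_succ fun s => ?_
  rcases le_or_gt (copyState a b ε s).2 (a s) with hreached | hnot
  · rw [copyState_succ_of_le hreached]; exact (copyState_fst_lt hb s).le
  · rw [copyState_succ_of_lt hnot]

theorem monotone_copyState_snd_sub_fst :
    Monotone fun s => (copyState a b ε s).2 - ε * (copyState a b ε s).1 := by
  refine monotone_nat_of_le_succ fun s => ?_
  rcases le_or_gt (copyState a b ε s).2 (a s) with hreached | hnot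
  · rw [copyState_succ_of_le hreached]; linarith
  · rw [copyState_succ_of_lt hnot]

theorem exists_target_reached (ha : Tendsto (fun s => (a s : ℝ)) atTop (nhds α))
    (htarget : ∀ s, ((copyState a b ε s).2 : ℝ) < α) (s : ℕ) :
    ∃ t ≥ s, (copyState a b ε t).2 ≤ a t := by
  by_contra! hnever
  have hconst : ∀ t ≥ s, copyState a b ε t = copyState a b ε s := by
    intro t ht
    induction ht with
    | refl => rfl
    | step ht ih => rw [copyState_succ_of_lt (hnever _ ht), ih]
  obtain ⟨t, hreached, ht⟩ :=
    ((ha.eventually_const_lt (htarget s)).and (eventually_ge_atTop s)).exists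
  have hnot := hnever t ht
  rw [hconst t ht] at hnot
  exact lt_asymm hnot (by exact_mod_cast hreached)

theorem mul_sub_copyState_fst_le (ha : Tendsto (fun s => (a s : ℝ)) atTop (nhds α))
    (hb : Tendsto (fun s => (b s : ℝ)) atTop (nhds β)) (hbmono : Monotone b) (hε : 0 < ε)
    (htarget : ∀ s, ((copyState a b ε s).2 : ℝ) < α) (s : ℕ) :
    ε * (β - (copyState a b ε s).1) ≤ α - (copyState a b ε s).2 := by
  refine le_of_tendsto' ((hb.sub_const _).const_mul _) fun k => ?_
  obtain ⟨t, ht, hreached⟩ := exists_target_reached ha htarget (max k s)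
  have hcopied : (copyState a b ε (t + 1)).1 = b t := by rw [copyState_succ_of_le hreached]
  have hdiff := monotone_copyState_snd_sub_fst (a := a) (b := b) (ε := ε)
    ((le_max_right k s).trans (ht.trans t.le_succ))
  have hbk : ε * b k ≤ ε * b t := by gcongr; exact hbmono ((le_max_left _ _).trans ht)
  have hlt := htarget (t + 1)
  simp only [hcopied] at hdiff
  have hq : (copyState a b ε s).2 - ε * (copyState a b ε s).1 + ε * b k ≤
      (copyState a b ε (t + 1)).2 := by linarith
  rify at hq
  linarith

theorem tsum_ofReal_sub_le {t : ℕ → ℝ} (ht : Monotone t) {B : ℝ} (hB : ∀ n, t n ≤ B) :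
    ∑' n, ENNReal.ofReal (t (n + 1) - t n) ≤ ENNReal.ofReal (B - t 0) := by
  refine ENNReal.tsum_le_of_sum_range_le fun N => ?_
  rw [← ENNReal.ofReal_sum_of_nonneg fun n _ => sub_nonneg.2 (ht n.le_succ),
    Finset.sum_range_sub]
  gcongr
  exact hB N

theorem measure_copyTest_le {μ : Measure Seq} (hμ : FairCoin μ) (hb : StrictMono b)
    (hbβ : ∀ s, (b s : ℝ) < β) (hε : 0 < ε) :
    μ (⋃ σ ∈ copyTest a b ε, cyl σ) ≤ ENNReal.ofReal (ε * (2 * (β - b 0 + 1))) := by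
  let t (s : ℕ) : ℝ := 2 * ε * (copyState a b ε s).1
  have ht : Monotone t := fun s s' h => by
    have hfst := monotone_copyState_fst (a := a) (ε := ε) hb h
    simp only [t]
    gcongr
  have htB (s : ℕ) : t s ≤ 2 * ε * β := by
    have hlt : ((copyState a b ε s).1 : ℝ) < b s := by exact_mod_cast copyState_fst_lt hb s
    simp only [t]
    gcongr
    exact (hlt.trans (hbβ s)).le
  have hcover : (⋃ σ ∈ copyTest a b ε, cyl σ) ⊆
      ⋃ s, binExp ⁻¹' Set.Icc (a s : ℝ) (a s + (t (s + 1) - t s)) := by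
    refine Set.iUnion₂_subset fun σ ⟨s, hreached, hleft, hright⟩ A hA =>
      Set.mem_iUnion.2 ⟨s, ?_⟩
    have hmem := binExp_mem_Icc_of_mem_cyl hA
    rify at hleft hright
    refine ⟨hleft.trans hmem.1, (hmem.2.trans hright).trans_eq ?_⟩
    simp only [t, copyState_succ_of_le hreached]
    ring
  calc μ (⋃ σ ∈ copyTest a b ε, cyl σ)
      ≤ ∑' s, μ (binExp ⁻¹' Set.Icc (a s : ℝ) (a s + (t (s + 1) - t s))) :=
        (measure_mono hcover).trans (measure_iUnion_le _)
    _ ≤ ∑' s, ENNReal.ofReal (t (s + 1) - t s) := by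
        refine ENNReal.tsum_le_tsum fun s => ?_
        have hle : (a s : ℝ) ≤ a s + (t (s + 1) - t s) :=
          le_add_of_nonneg_right (sub_nonneg.2 (ht s.le_succ))
        exact (hμ.measure_Icc_le hle).trans_eq (by rw [add_sub_cancel_left])
    _ ≤ ENNReal.ofReal (2 * ε * β - t 0) := tsum_ofReal_sub_le ht htB
    _ = ENNReal.ofReal (ε * (2 * (β - b 0 + 1))) := by
        congr 1
        simp only [t, copyState]
        push_cast
        ring

theorem copyState_snd_lt {A : Seq} (hA : A ∉ ⋃ σ ∈ copyTest a b ε, cyl σ) (hε : 0 < ε)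
    (haA : ∀ s, (a s : ℝ) < binExp A) (hb : StrictMono b) (s : ℕ) :
    ((copyState a b ε s).2 : ℝ) < binExp A := by
  induction s with
  | zero => exact haA 0
  | succ s ih =>
    rcases le_or_gt (copyState a b ε s).2 (a s) with hreached | hnot
    · rw [copyState_succ_of_le hreached]
      have hgrowth : 0 < ε * (b s - (copyState a b ε s).1) :=
        mul_pos hε (sub_pos.2 (copyState_fst_lt hb s))
      by_contra! hle
      obtain ⟨n, hleft, hright⟩ := exists_pre_subinterval (A := A) (l := a s)
        (u := (a s + 2 * ε * (b s - (copyState a b ε s).1) : ℚ)) ⟨haA s, hle.trans_lt (by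
          norm_cast; linarith)⟩
      exact hA (Set.mem_iUnion₂.2
        ⟨pre A n, ⟨s, hreached, by exact_mod_cast hleft, by exact_mod_cast hright⟩,
          mem_cyl_pre A n⟩)
    · rwa [copyState_succ_of_lt hnot]

theorem solovayLE_of_copyState_snd_lt (ha : Computable a) (hamono : StrictMono a)
    (haα : Tendsto (fun s => (a s : ℝ)) atTop (nhds α)) (hb : Computable b)
    (hbmono : StrictMono b) (hbβ : Tendsto (fun s => (b s : ℝ)) atTop (nhds β)) (hε : 0 < ε)
    (htarget : ∀ s, ((copyState a b ε s).2 : ℝ) < α) : SolovayLE β α := by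
  have hstate : Computable (copyState a b ε) :=
    computable_copyState ha hb (Computable.const ε) Computable.id
  obtain ⟨f, hf, hsound, hdom⟩ := exists_partrec_search
    (R := fun q s => q < (copyState a b ε s).2) (by fun_prop)
  refine ⟨⌈ε⁻¹⌉₊, fun q => (f q).map fun s => (copyState a b ε s).1,
    hf.map (by fun_prop : Computable fun x : ℚ × ℕ => (copyState a b ε x.2).1), fun q hq => ?_⟩
  have hex : ∃ s, q < (copyState a b ε s).2 := by
    obtain ⟨k, hk⟩ := (haα.eventually_const_lt hq).exists
    obtain ⟨s, hks, hreached⟩ := exists_target_reached haα htarget k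
    refine ⟨s + 1, ?_⟩
    rw [copyState_succ_of_le hreached]
    have hqk : q < a k := by exact_mod_cast hk
    exact (hqk.trans_le (hamono.monotone hks)).trans_le (le_add_of_nonneg_right
      (mul_nonneg hε.le (sub_nonneg.2 (copyState_fst_lt hbmono s).le)))
  have hmem := Part.get_mem (hdom q hex)
  have hqs := hsound q _ hmem
  set s := (f q).get (hdom q hex)
  refine ⟨_, Part.mem_map _ hmem, ?_, ?_⟩
  · have hlt : ((copyState a b ε s).1 : ℝ) < b s := by exact_mod_cast copyState_fst_lt hbmono s
    exact hlt.trans (lt_of_strictMono_tendsto hbmono hbβ s)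
  · have : (0 : ℝ) < ε := by exact_mod_cast hε
    have hqs' : (q : ℝ) < (copyState a b ε s).2 := by exact_mod_cast hqs
    have hceil : (ε : ℝ)⁻¹ ≤ ⌈ε⁻¹⌉₊ := by exact_mod_cast Nat.le_ceil ε⁻¹
    calc β - (copyState a b ε s).1
        = (ε : ℝ)⁻¹ * (ε * (β - (copyState a b ε s).1)) := by field_simp
      _ ≤ (ε : ℝ)⁻¹ * (α - (copyState a b ε s).2) := by
        gcongr
        exact mul_sub_copyState_fst_le haα hbβ hbmono.monotone hε htarget s
      _ < (ε : ℝ)⁻¹ * (α - q) := by gcongr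
      _ ≤ ⌈ε⁻¹⌉₊ * (α - q) := by gcongr

end Strategy

theorem solovayLE_of_mlRandom {μ : Measure Seq} (hμ : FairCoin μ) {α β : ℝ}
    (hα01 : α ∈ Set.Icc 0 1) (hα : LeftCE α) (hrand : ∀ A : Seq, binExp A = α → MLRandom μ A)
    (hβ : LeftCE β) : SolovayLE β α := by
  obtain ⟨a, ha, hamono, haα⟩ := hα
  obtain ⟨b, hb, hbmono, hbβ⟩ := hβ
  obtain ⟨A, rfl⟩ := exists_binExp_eq hα01
  obtain ⟨k, hk⟩ := pow_unbounded_of_one_lt (2 * (β - b 0 + 1)) (one_lt_two (α := ℝ))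
  have hε (i : ℕ) : (0 : ℚ) < 2⁻¹ ^ (i + k) := by positivity
  have htest : MLTest μ fun i => ⋃ σ ∈ copyTest a b (2⁻¹ ^ (i + k)), cyl σ := by
    refine ⟨{x | x.2 ∈ copyTest a b (2⁻¹ ^ (x.1 + k))},
      cePred_copyTest ha hb (ε := fun i => 2⁻¹ ^ (i + k)) (by fun_prop), fun i => rfl, fun i =>
      (measure_copyTest_le hμ hbmono (lt_of_strictMono_tendsto hbmono hbβ) (hε i)).trans ?_⟩
    calc ENNReal.ofReal (((2⁻¹ ^ (i + k) : ℚ) : ℝ) * (2 * (β - b 0 + 1)))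
        ≤ ENNReal.ofReal (((2⁻¹ ^ (i + k) : ℚ) : ℝ) * 2 ^ k) := by
          have := hε i
          gcongr
      _ = ENNReal.ofReal (2⁻¹ ^ i) := by
          congr 1
          push_cast
          rw [pow_add, mul_assoc, ← mul_pow]
          norm_num
      _ = 2⁻¹ ^ i := by
          rw [ENNReal.ofReal_pow (by positivity), ENNReal.ofReal_inv_of_pos (by norm_num)]
          simp
  have hpass := hrand A rfl _ htest
  rw [Set.mem_iInter, not_forall] at hpass
  obtain ⟨i, hi⟩ := hpass
  exact solovayLE_of_copyState_snd_lt ha hamono haα hb hbmono hbβ (hε i)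
    (copyState_snd_lt hi (hε i) (lt_of_strictMono_tendsto hamono haα) hbmono)

end RandomToOmegaLike

section Weight

open MeasureTheory Filter

variable {S T : Set Str}

theorem weight_mono (h : S ⊆ T) : weight S ≤ weight T :=
  ENNReal.tsum_mono_subtype (fun σ : Str => (2⁻¹ : ℝ≥0∞) ^ σ.length) h

theorem weight_union (h : Disjoint S T) : weight (S ∪ T) = weight S + weight T :=
  Summable.tsum_union_disjoint (f := fun σ : Str => (2⁻¹ : ℝ≥0∞) ^ σ.length) h
    ENNReal.summable ENNReal.summable

theorem weight_coe_finset (D : Finset Str) : weight D = ∑ σ ∈ D, 2⁻¹ ^ σ.length :=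
  D.tsum_subtype' fun σ : Str => (2⁻¹ : ℝ≥0∞) ^ σ.length

theorem toReal_sum_two_inv_pow {ι : Type*} (D : Finset ι) (len : ι → ℕ) :
    (∑ x ∈ D, (2⁻¹ : ℝ≥0∞) ^ len x).toReal = (∑ x ∈ D, 2⁻¹ ^ len x : ℚ) := by
  rw [ENNReal.toReal_sum fun x _ => by simp]
  push_cast
  simp

theorem weight_image_append (ρ : Str) :
    weight ((ρ ++ ·) '' S) = 2⁻¹ ^ ρ.length * weight S := by
  rw [weight, tsum_image (fun σ : Str => (2⁻¹ : ℝ≥0∞) ^ σ.length)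
    (List.append_right_injective ρ).injOn, weight, ← ENNReal.tsum_mul_left]
  simp only [List.length_append, pow_add]

theorem two_mul_weight_le {f : Str → Str} (hf : Set.InjOn f S) (hmaps : Set.MapsTo f S T)
    (hlen : ∀ σ ∈ S, (f σ).length + 1 ≤ σ.length) : 2 * weight S ≤ weight T := by
  calc 2 * weight S = ∑' σ : S, 2 * 2⁻¹ ^ (σ : Str).length := ENNReal.tsum_mul_left.symm
    _ ≤ ∑' σ : S, 2⁻¹ ^ (f σ).length := by
      refine ENNReal.tsum_le_tsum fun σ => ?_
      calc (2 : ℝ≥0∞) * 2⁻¹ ^ (σ : Str).length ≤ 2 * 2⁻¹ ^ ((f σ).length + 1) := by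
            gcongr 2 * ?_
            exact pow_le_pow_right_of_le_one' (by simp) (hlen σ σ.2)
        _ = 2⁻¹ ^ (f σ).length := by
            rw [pow_succ', ← mul_assoc, ENNReal.mul_inv_cancel (by simp) (by simp), one_mul]
    _ = weight (f '' S) := (tsum_image (fun σ : Str => (2⁻¹ : ℝ≥0∞) ^ σ.length) hf).symm
    _ ≤ weight T := weight_mono hmaps.image_subset

theorem tendsto_weight_iUnion {D : ℕ → Finset Str} (hD : Monotone D) :
    Tendsto (fun s => weight (D s)) atTop (nhds (weight (⋃ s, (D s : Set Str)))) := by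
  let E (s : ℕ) : Finset (⋃ s, (D s : Set Str)) := (D s).subtype _
  have hE : Tendsto E atTop atTop := tendsto_atTop_finset_of_monotone
    (fun s t h => Finset.subtype_mono (hD h)) fun σ => by
      obtain ⟨s, hs⟩ := Set.mem_iUnion.1 σ.2
      exact ⟨s, Finset.mem_subtype.2 hs⟩
  refine (ENNReal.summable.hasSum.comp hE).congr fun s => ?_
  rw [weight_coe_finset]
  exact Finset.sum_subtype_of_mem (fun σ : Str => (2⁻¹ : ℝ≥0∞) ^ σ.length) fun σ hσ =>
    Set.mem_iUnion.2 ⟨s, hσ⟩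

theorem monotone_sum_two_inv_pow {D : ℕ → Finset Str} (hD : Monotone D) :
    Monotone fun s => ∑ σ ∈ D s, (2 : ℚ)⁻¹ ^ σ.length := fun s t hst =>
  Finset.sum_le_sum_of_subset_of_nonneg (hD hst) fun _ _ _ => by positivity

theorem Omega_eq_toReal_weight (V : Str →. Str) :
    Omega V = (weight {σ | (V σ).Dom}).toReal := by
  rw [weight, ENNReal.tsum_toReal_eq fun σ => by simp, Omega,
    tsum_subtype {σ | (V σ).Dom} fun σ : Str => ((2⁻¹ : ℝ≥0∞) ^ σ.length).toReal]
  simp [Set.indicator_apply]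

theorem exists_domain_approximation {V : Str →. Str} (hV : IsMachine V) :
    ∃ D : ℕ → Finset Str, Monotone D ∧ ⋃ s, (D s : Set Str) = {p | (V p).Dom} ∧
      (∀ s, ∀ p ∈ D s, ∀ y ∈ V p, y.length < s) ∧
      Computable fun s => ∑ p ∈ D s, (2 : ℚ)⁻¹ ^ p.length := by
  obtain ⟨h, hcomp, hmono, hbound, hspec⟩ := exists_stage_approximation hV
  have hfin (s : ℕ) : {p | ∃ y, h s p = some y ∧ y.length < s}.Finite :=
    .of_finite_image (f := Encodable.encode) ((Set.finite_Iio s).subset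
      (Set.image_subset_iff.2 fun p ⟨y, hy, _⟩ => hbound hy)) Encodable.encode_injective.injOn
  have hmem {s : ℕ} {p : Str} : p ∈ (hfin s).toFinset ↔ ∃ y, h s p = some y ∧ y.length < s := by
    simp
  refine ⟨fun s => (hfin s).toFinset, fun s t hst p hp => ?_, ?_, fun s p hp y hy => ?_, ?_⟩
  · obtain ⟨y, hy, hlen⟩ := hmem.1 hp
    exact hmem.2 ⟨y, hmono hst hy, hlen.trans_le hst⟩
  · ext p
    simp only [Set.mem_iUnion, Finset.mem_coe, hmem, Set.mem_ofPred_eq, Part.dom_iff_mem, hspec]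
    refine ⟨fun ⟨s, y, hy, _⟩ => ⟨y, s, hy⟩, fun ⟨y, s, hy⟩ => ?_⟩
    exact ⟨max s (y.length + 1), y, hmono (le_max_left _ _) hy, by omega⟩
  · obtain ⟨y', hy', hlen⟩ := hmem.1 hp
    rwa [Part.mem_unique hy (hspec.2 ⟨s, hy'⟩)]
  · have hD : ComputablePred fun x : ℕ × Str => x.2 ∈ (hfin x.1).toFinset := by
      simp only [hmem]
      fun_prop
    have hF : Computable fun x : ℕ × Str => (2 : ℚ)⁻¹ ^ x.2.length := by fun_prop
    refine computable_sum_of_encode_lt (F := fun (_ : ℕ) (p : Str) => (2 : ℚ)⁻¹ ^ p.length)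
      (D := fun s => (hfin s).toFinset) (N := fun s => s) (by fun_prop) hD hF Computable.id
      fun s p hp => ?_
    obtain ⟨y, hy, -⟩ := hmem.1 hp
    exact hbound hy

variable {μ : Measure Seq} {V : Str →. Str}

theorem FairCoin.weight_ne_top (hμ : FairCoin μ) (hS : PrefixFree S) : weight S ≠ ⊤ :=
  ((hμ.weight_le_one hS).trans_lt ENNReal.one_lt_top).ne

theorem FairCoin.Omega_le_one (hμ : FairCoin μ) (hV : PrefixFreeMachine V) : Omega V ≤ 1 := by
  rw [Omega_eq_toReal_weight]
  exact ENNReal.toReal_le_of_le_ofReal zero_le_one (by simpa using hμ.weight_le_one hV.2)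

theorem FairCoin.tendsto_sum_domain (hμ : FairCoin μ) (hV : PrefixFreeMachine V)
    {D : ℕ → Finset Str} (hD : Monotone D) (hdom : ⋃ s, (D s : Set Str) = {p | (V p).Dom}) :
    Tendsto (fun s => ((∑ p ∈ D s, 2⁻¹ ^ p.length : ℚ) : ℝ)) atTop (nhds (Omega V)) := by
  rw [Omega_eq_toReal_weight, ← hdom]
  simp only [← toReal_sum_two_inv_pow, ← weight_coe_finset]
  exact (ENNReal.tendsto_toReal (hdom ▸ hμ.weight_ne_top hV.2)).comp (tendsto_weight_iUnion hD)

theorem FairCoin.leftCE_Omega (hμ : FairCoin μ) (hV : PrefixFreeMachine V) :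
    LeftCE (Omega V) := by
  obtain ⟨D, hD, hdom, -, hcomp⟩ := exists_domain_approximation hV.1
  exact .of_monotone hcomp (monotone_sum_two_inv_pow hD) (hμ.tendsto_sum_domain hV hD hdom)

end Weight

section PrefixFreeMachines

open Encodable

variable {γ : Type*} [Primcodable γ] {R : γ → Prop} {prog out : γ → Str} {len : γ → ℕ}

theorem exists_prefixFreeMachine_of_enum (hR : ComputablePred R) (hprog : Computable prog)
    (hout : Computable out) :
    ∃ M, PrefixFreeMachine M ∧ ∀ x, R x →
      (∀ y, R y → Comparable (prog y) (prog x) → prog y = prog x ∧ out y = out x) →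
      out x ∈ M (prog x) := by
  let Kept (x : γ) : Prop :=
    R x ∧ ∀ y, encode y < encode x → R y → ¬ Comparable (prog y) (prog x)
  have hKept : ComputablePred Kept := by
    fun_prop
  have hunique {x y : γ} (hx : Kept x) (hy : Kept y) (hxy : Comparable (prog x) (prog y)) :
      x = y := by
    rcases lt_trichotomy (encode x) (encode y) with hlt | heq | hlt
    · exact absurd hxy (hy.2 x hlt hx.1)
    · exact encode_injective heq
    · exact absurd (comparable_comm.1 hxy) (hx.2 y hlt hy.1)
  obtain ⟨M, hM, hgraph⟩ := exists_partrec_of_graph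
    (P := fun σ τ x => Kept x ∧ prog x = σ ∧ out x = τ) (by fun_prop)
    (by rintro _ _ _ x y ⟨hx, rfl, rfl⟩ ⟨hy, hyx, rfl⟩
        rw [hunique hx hy (Or.inl (hyx ▸ List.prefix_rfl))])
  refine ⟨M, ⟨hM, fun σ hσ τ hτ hprefix => ?_⟩, fun x hx hconflict => ?_⟩
  · obtain ⟨x, hx, rfl, -⟩ := (hgraph _ _).1 (Part.get_mem hσ)
    obtain ⟨y, hy, rfl, -⟩ := (hgraph _ _).1 (Part.get_mem hτ)
    rw [hunique hx hy (Or.inl hprefix)]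
  · obtain ⟨y, ⟨hy, hprog_y, hout_y⟩, hmin⟩ := (measure (encode (α := γ))).wf.has_min
      {y | R y ∧ prog y = prog x ∧ out y = out x} ⟨x, hx, rfl, rfl⟩
    refine (hgraph _ _).2 ⟨y, ⟨hy, fun z hzy hz hcomp => hmin z ?_ hzy⟩, hprog_y, hout_y⟩
    rw [hprog_y] at hcomp
    exact ⟨hz, hconflict z hz hcomp⟩

/-- A string of length `n + 1` whose interval lies in `[x, x + 2⁻ⁿ]`. -/
def innerStr (x : ℚ) (n : ℕ) : Str := strOf (n + 1) (⌊x * 2 ^ (n + 1)⌋₊ + 1)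

theorem innerStr_bounds {x : ℚ} {n : ℕ} (hx : 0 ≤ x) (hx1 : x + 2⁻¹ ^ n ≤ 1) :
    x ≤ leftEnd (innerStr x n) ∧ rightEnd (innerStr x n) ≤ x + 2⁻¹ ^ n := by
  have hunit : (2 : ℚ) ^ (n + 1) * 2⁻¹ ^ (n + 1) = 1 := by rw [← mul_pow]; norm_num
  have hhalf : (2 : ℚ)⁻¹ ^ n = 2 * 2⁻¹ ^ (n + 1) := by rw [pow_succ]; ring
  have hfloor := Nat.floor_le (show 0 ≤ x * 2 ^ (n + 1) by positivity)
  have hfloor' := Nat.lt_floor_add_one (x * 2 ^ (n + 1))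
  have hpos : (0 : ℚ) < 2⁻¹ ^ (n + 1) := by positivity
  have hscaled : (x + 2⁻¹ ^ n) * 2 ^ (n + 1) = x * 2 ^ (n + 1) + 2 := by
    rw [hhalf]; linear_combination 2 * hunit
  have hlt : ⌊x * 2 ^ (n + 1)⌋₊ + 1 < 2 ^ (n + 1) := by
    have hle : (x + 2⁻¹ ^ n) * 2 ^ (n + 1) ≤ 1 * 2 ^ (n + 1) := by gcongr
    have hlt : ((⌊x * 2 ^ (n + 1)⌋₊ + 1 : ℕ) : ℚ) < (2 ^ (n + 1) : ℕ) := by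
      push_cast; linarith
    exact_mod_cast hlt
  rw [rightEnd_eq, leftEnd, innerStr, length_strOf, val_strOf, Nat.mod_eq_of_lt hlt]
  push_cast
  constructor <;> nlinarith

theorem exists_computable_partialSums (hR : ComputablePred R) (hlen : Computable len)
    (hw : ∑' x : {x // R x}, (2⁻¹ : ℝ≥0∞) ^ len x ≤ 1) :
    ∃ start : ℕ → ℚ, Computable start ∧ Monotone start ∧ (∀ k, start k ∈ Set.Icc 0 1) ∧
      ∀ x, R x → start (encode x) + 2⁻¹ ^ len x ≤ start (encode x + 1) := by
  have hfin (k : ℕ) : {y | R y ∧ encode y < k}.Finite :=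
    .of_finite_image (f := encode) ((Set.finite_Iio k).subset
      (Set.image_subset_iff.2 fun y hy => hy.2)) encode_injective.injOn
  let D (k : ℕ) : Finset γ := (hfin k).toFinset
  have hmem {k : ℕ} {y : γ} : y ∈ D k ↔ R y ∧ encode y < k := by simp [D]
  refine ⟨fun k => ∑ y ∈ D k, 2⁻¹ ^ len y, ?_, fun k l hkl => ?_,
    fun k => ⟨Finset.sum_nonneg fun _ _ => by positivity, ?_⟩, fun x hx => ?_⟩
  · refine computable_sum_of_encode_lt (F := fun (_ : ℕ) (y : γ) => (2 : ℚ)⁻¹ ^ len y)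
      (D := D) (N := fun k => k) (by fun_prop) ?_ (by fun_prop) Computable.id
      fun k y hy => (hmem.1 hy).2
    simp only [hmem]
    fun_prop
  · exact Finset.sum_le_sum_of_subset_of_nonneg
      (fun y hy => hmem.2 ((hmem.1 hy).imp_right hkl.trans_lt')) fun _ _ _ => by positivity
  · have hsum : ∑ y ∈ D k, (2⁻¹ : ℝ≥0∞) ^ len y ≤ 1 := by
      rw [← Finset.sum_subtype_of_mem (p := R) _ fun y hy => (hmem.1 hy).1]
      exact (ENNReal.sum_le_tsum _).trans hw
    have hreal := ENNReal.toReal_mono ENNReal.one_ne_top hsum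
    rw [toReal_sum_two_inv_pow, ENNReal.toReal_one] at hreal
    exact_mod_cast hreal
  · rw [add_comm, ← Finset.sum_insert (f := fun y => (2 : ℚ)⁻¹ ^ len y)
      (show x ∉ D (encode x) by simp [hmem])]
    exact Finset.sum_le_sum_of_subset_of_nonneg (Finset.insert_subset (hmem.2 ⟨hx, by simp⟩)
      fun y hy => hmem.2 ((hmem.1 hy).imp_right Nat.lt_succ_of_lt)) fun _ _ _ => by positivity

theorem exists_incomparable_programs (hR : ComputablePred R) (hlen : Computable len)
    (hw : ∑' x : {x // R x}, (2⁻¹ : ℝ≥0∞) ^ len x ≤ 1) :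
    ∃ prog : γ → Str, Computable prog ∧ (∀ x, (prog x).length = len x + 1) ∧
      ∀ x y, R x → R y → Comparable (prog x) (prog y) → x = y := by
  obtain ⟨start, hstart, hmono, hunit, hsucc⟩ := exists_computable_partialSums hR hlen hw
  have hbounds {x : γ} (hx : R x) := innerStr_bounds (x := start (encode x)) (n := len x)
    (hunit _).1 ((hsucc x hx).trans (hunit _).2)
  have hlt {x y : γ} (hx : R x) (hy : R y) (hxy : encode x < encode y) :
      ¬ Comparable (innerStr (start (encode x)) (len x)) (innerStr (start (encode y)) (len y)) :=
    not_comparable_of_rightEnd_le ((hbounds hx).2.trans ((hsucc x hx).trans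
      ((hmono hxy).trans (hbounds hy).1)))
  refine ⟨fun x => innerStr (start (encode x)) (len x), by unfold innerStr; fun_prop,
    fun x => length_strOf _ _, fun x y hx hy hxy => ?_⟩
  rcases lt_trichotomy (encode x) (encode y) with h | heq | h
  · exact absurd hxy (hlt hx hy h)
  · exact encode_injective heq
  · exact absurd (comparable_comm.1 hxy) (hlt hy hx h)

/-- The Kraft–Chaitin theorem, with a loss of one bit. -/
theorem exists_prefixFreeMachine_of_tsum_le_one (hR : ComputablePred R) (hlen : Computable len)
    (hout : Computable out) (hw : ∑' x : {x // R x}, (2⁻¹ : ℝ≥0∞) ^ len x ≤ 1) :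
    ∃ M, PrefixFreeMachine M ∧ ∀ x, R x → ∃ σ : Str, σ.length = len x + 1 ∧ out x ∈ M σ := by
  obtain ⟨prog, hprog, hlength, hinj⟩ := exists_incomparable_programs hR hlen hw
  obtain ⟨M, hM, hspec⟩ := exists_prefixFreeMachine_of_enum hR hprog hout
  refine ⟨M, hM, fun x hx => ⟨prog x, hlength x, hspec x hx fun y hy hyx => ?_⟩⟩
  rw [hinj y x hy hx hyx]
  exact ⟨rfl, rfl⟩

end PrefixFreeMachines

section UniversalMachine

theorem Cplx_le_length {M : Str →. Str} {σ τ : Str} (h : τ ∈ M σ) : Cplx M τ ≤ σ.length :=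
  sInf_le ⟨σ, h, rfl⟩

theorem exists_mem_of_Cplx_le {M : Str →. Str} {τ : Str} {n : ℕ} (h : Cplx M τ ≤ n) :
    ∃ σ : Str, τ ∈ M σ ∧ σ.length ≤ n := by
  have hne : ((fun σ : Str => (σ.length : ℕ∞)) '' {σ | τ ∈ M σ}).Nonempty := by
    by_contra! hempty
    rw [Cplx, hempty, sInf_empty, top_le_iff] at h
    exact ENat.natCast_ne_top n h
  obtain ⟨σ, hσ, hlen⟩ := csInf_mem hne
  have hle : (σ.length : ℕ∞) ≤ n := hlen.trans_le h
  exact ⟨σ, hσ, by exact_mod_cast hle⟩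

theorem Cplx_le_add_iff {U M : Str →. Str} {c : ℕ} :
    (∀ τ, Cplx U τ ≤ Cplx M τ + c) ↔
      ∀ σ τ, τ ∈ M σ → ∃ σ' : Str, τ ∈ U σ' ∧ σ'.length ≤ σ.length + c := by
  constructor
  · intro h σ τ hτ
    refine exists_mem_of_Cplx_le ((h τ).trans ?_)
    push_cast
    gcongr
    exact Cplx_le_length hτ
  · intro h τ
    cases hM : Cplx M τ with
    | top => simp
    | coe n =>
      obtain ⟨σ, hσ, hlen⟩ := exists_mem_of_Cplx_le hM.le
      obtain ⟨σ', hσ', hlen'⟩ := h σ τ hσ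
      exact (Cplx_le_length hσ').trans (by exact_mod_cast hlen'.trans (by gcongr))

@[fun_prop]
theorem computable_replicate {α β : Type*} [Primcodable α] [Primcodable β] {f : α → ℕ}
    {g : α → β} (hf : Computable f) (hg : Computable g) :
    Computable fun a => List.replicate (f a) (g a) := by
  have hiter : Computable fun x : β × ℕ => List.replicate x.2 x.1 :=
    computable_of_succ_eq (F := fun b n => List.replicate n b) (step := fun b x => b :: x.2)
      (Computable.const []) (by fun_prop) fun _ _ => rfl
  exact hiter.comp (hg.pair hf)

/-- The string `0ᵉ1p`, a program for a universal machine to run the `e`-th machine on `p`. -/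
def tagged (e : ℕ) (p : Str) : Str := List.replicate e false ++ true :: p

theorem length_tagged (e : ℕ) (p : Str) : (tagged e p).length = p.length + (e + 1) := by
  simp only [tagged, List.length_append, List.length_replicate, List.length_cons]
  ring

theorem comparable_cons_iff {b b' : Bool} {σ τ : Str} :
    Comparable (b :: σ) (b' :: τ) ↔ b = b' ∧ Comparable σ τ := by
  simp only [Comparable, List.cons_prefix_cons]
  tauto

theorem comparable_tagged_iff {e e' : ℕ} {p p' : Str} :
    Comparable (tagged e p) (tagged e' p') ↔ e = e' ∧ Comparable p p' := by
  induction e generalizing e' with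
  | zero => cases e' <;> simp [tagged, List.replicate_succ, comparable_cons_iff]
  | succ e ih =>
    cases e' with
    | zero => simp [tagged, List.replicate_succ, comparable_cons_iff]
    | succ e' => simpa [tagged, List.replicate_succ, comparable_cons_iff] using ih

/-- The `e`-th machine, in an effective listing of all machines. -/
def machineOf (e : ℕ) (p : Str) : Part Str :=
  (Nat.Partrec.Code.eval (Denumerable.ofNat Nat.Partrec.Code e) (Encodable.encode p)).bind
    fun n => (Encodable.decode n : Option Str)

theorem partrec_machineOf : Partrec fun x : ℕ × Str => machineOf x.1 x.2 :=
  (Nat.Partrec.Code.eval_part.comp ((Computable.ofNat _).comp Computable.fst)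
    (Computable.encode.comp Computable.snd)).bind
      (Computable.decode.comp Computable.snd).ofOption

theorem exists_machineOf_eq {M : Str →. Str} (hM : IsMachine M) : ∃ e, machineOf e = M := by
  obtain ⟨c, hc⟩ := Nat.Partrec.Code.exists_code.1 hM
  refine ⟨Encodable.encode c, funext fun p => Part.ext fun τ => ?_⟩
  simp [machineOf, hc]

theorem exists_universalPFMachine : ∃ U : Str →. Str, UniversalPFMachine U := by
  obtain ⟨h, hcomp, -, -, hspec⟩ := exists_stage_approximation partrec_machineOf
  obtain ⟨U, hU, hkeep⟩ := exists_prefixFreeMachine_of_enum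
    (R := fun x : ℕ × ℕ × Str × Str => h x.1 (x.2.1, x.2.2.1) = some x.2.2.2)
    (prog := fun x => tagged x.2.1 x.2.2.1) (out := fun x => x.2.2.2) (by fun_prop)
    (by unfold tagged; fun_prop) (by fun_prop)
  refine ⟨U, hU, fun M hM => ?_⟩
  obtain ⟨e, rfl⟩ := exists_machineOf_eq hM.1
  refine ⟨e + 1, Cplx_le_add_iff.2 fun p τ hτ => ⟨tagged e p, ?_, (length_tagged e p).le⟩⟩
  obtain ⟨s, hs⟩ := (hspec (a := (e, p))).1 hτ
  refine hkeep (s, e, p, τ) hs ?_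
  rintro ⟨s', e', p', τ'⟩ hs' hcomparable
  obtain ⟨rfl, hpp'⟩ := comparable_tagged_iff.1 hcomparable
  have hτ' : τ' ∈ machineOf e' p' := (hspec (a := (e', p'))).2 ⟨s', hs'⟩
  obtain rfl : p' = p := hM.2.eq_of_comparable (Part.dom_iff_mem.2 ⟨_, hτ'⟩)
    (Part.dom_iff_mem.2 ⟨_, hτ⟩) hpp'
  exact ⟨rfl, Part.mem_unique hτ' hτ⟩

end UniversalMachine

section DyadicDomain

open MeasureTheory Filter

/-- The dyadic rationals `m s / 2ˢ` form a computable nondecreasing sequence of nonnegative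
rationals that converges strictly from below to `x ≤ 1`. -/
structure DyadicApprox (m : ℕ → ℕ) (x : ℝ) : Prop where
  computable : Computable m
  two_mul_le : ∀ s, 2 * m s ≤ m (s + 1)
  lt : ∀ s, m s * 2⁻¹ ^ s < x
  le_one : x ≤ 1
  tendsto : Tendsto (fun s => (m s : ℝ) * 2⁻¹ ^ s) atTop (nhds x)

/-- The strings of length `s + 1` whose interval lies between `m s / 2ˢ` and
`m (s + 1) / 2ˢ⁺¹`, for all `s`. Their intervals tile `[0, x)` if the rationals `m s / 2ˢ`
increase from `0` to `x`. -/
def dyadicDom (m : ℕ → ℕ) : Set Str :=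
  {ρ | ∃ s, ρ.length = s + 1 ∧ 2 * m s ≤ val ρ ∧ val ρ < m (s + 1)}

variable {m : ℕ → ℕ} {x : ℝ}

theorem computablePred_mem_dyadicDom (hm : Computable m) : ComputablePred (· ∈ dyadicDom m) := by
  have hmem (ρ : Str) : ρ ∈ dyadicDom m ↔
      ∃ s < ρ.length, ρ.length = s + 1 ∧ 2 * m s ≤ val ρ ∧ val ρ < m (s + 1) :=
    exists_congr fun s => (and_iff_right_of_imp fun h => by omega).symm
  simp only [hmem]
  fun_prop

theorem dyadicDom_bounds {ρ : Str} (hρ : ρ ∈ dyadicDom m) : ∃ s, ρ.length = s + 1 ∧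
    m s * 2⁻¹ ^ s ≤ leftEnd ρ ∧ rightEnd ρ ≤ m (s + 1) * 2⁻¹ ^ (s + 1) := by
  obtain ⟨s, hlen, hleft, hright⟩ := hρ
  have hleft' : (2 * m s : ℚ) ≤ val ρ := by exact_mod_cast hleft
  have hright' : (val ρ + 1 : ℚ) ≤ m (s + 1) := by exact_mod_cast hright
  refine ⟨s, hlen, ?_, ?_⟩
  · calc (m s : ℚ) * 2⁻¹ ^ s = 2 * m s * 2⁻¹ ^ (s + 1) := by rw [pow_succ]; ring
      _ ≤ leftEnd ρ := by rw [leftEnd, hlen]; gcongr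
  · rw [rightEnd_eq, hlen]; gcongr

namespace DyadicApprox

theorem apply_zero (hm : DyadicApprox m x) : m 0 = 0 := by
  have hlt := (hm.lt 0).trans_le hm.le_one
  simpa using hlt

theorem le_two_pow (hm : DyadicApprox m x) (s : ℕ) : m s ≤ 2 ^ s := by
  have hle := (hm.lt s).le.trans hm.le_one
  rw [inv_pow, ← div_eq_mul_inv, div_le_one (by positivity)] at hle
  exact_mod_cast hle

theorem monotone_ratio (hm : DyadicApprox m x) : Monotone fun s => (m s : ℚ) * 2⁻¹ ^ s := by
  refine monotone_nat_of_le_succ fun s => ?_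
  have hle : (2 * m s : ℚ) ≤ m (s + 1) := by exact_mod_cast hm.two_mul_le s
  calc (m s : ℚ) * 2⁻¹ ^ s = 2 * m s * 2⁻¹ ^ (s + 1) := by rw [pow_succ]; ring
    _ ≤ m (s + 1) * 2⁻¹ ^ (s + 1) := by gcongr

theorem rightEnd_lt (hm : DyadicApprox m x) {ρ : Str} (hρ : ρ ∈ dyadicDom m) :
    (rightEnd ρ : ℝ) < x := by
  obtain ⟨s, -, -, hright⟩ := dyadicDom_bounds hρ
  refine (Rat.cast_le.2 hright).trans_lt ?_
  push_cast
  exact hm.lt (s + 1)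

theorem prefixFree (hm : DyadicApprox m x) : PrefixFree (dyadicDom m) := by
  intro ρ hρ ρ' hρ' hpre
  obtain ⟨s, hlen, -, hright⟩ := dyadicDom_bounds hρ
  obtain ⟨s', hlen', hleft', -⟩ := dyadicDom_bounds hρ'
  rcases hpre.length_le.eq_or_lt with heq | hlt
  · exact hpre.eq_of_length heq
  · have hle : rightEnd ρ ≤ leftEnd ρ' :=
      hright.trans ((hm.monotone_ratio (by omega)).trans hleft')
    exact absurd (Or.inl hpre) (not_comparable_of_rightEnd_le hle)

theorem weight_layer (hm : DyadicApprox m x) (s : ℕ) :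
    weight {ρ | ρ.length = s + 1 ∧ 2 * m s ≤ val ρ ∧ val ρ < m (s + 1)} =
      (m (s + 1) - 2 * m s : ℕ) * 2⁻¹ ^ (s + 1) := by
  have hval {v : ℕ} (hv : v < m (s + 1)) : val (strOf (s + 1) v) = v :=
    (val_strOf _ _).trans (Nat.mod_eq_of_lt (hv.trans_le (hm.le_two_pow _)))
  have himage : {ρ | ρ.length = s + 1 ∧ 2 * m s ≤ val ρ ∧ val ρ < m (s + 1)} =
      ((Finset.Ico (2 * m s) (m (s + 1))).image (strOf (s + 1)) : Finset Str) := by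
    ext ρ
    simp only [Set.mem_ofPred_eq, Finset.coe_image, Set.mem_image, Finset.mem_coe, Finset.mem_Ico]
    refine ⟨fun ⟨hlen, hv⟩ => ⟨val ρ, hv, hlen ▸ strOf_length_val ρ⟩, ?_⟩
    rintro ⟨v, hv, rfl⟩
    rw [hval hv.2]
    exact ⟨length_strOf _ _, hv⟩
  have hinj : Set.InjOn (strOf (s + 1)) (Finset.Ico (2 * m s) (m (s + 1)) : Finset ℕ) :=
    fun v hv w hw h => by
      rw [← hval (Finset.mem_Ico.1 hv).2, h, hval (Finset.mem_Ico.1 hw).2]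
  rw [himage, weight_coe_finset, Finset.sum_image hinj]
  simp only [length_strOf, Finset.sum_const, Nat.card_Ico, nsmul_eq_mul]

theorem weight_length_le (hm : DyadicApprox m x) (t : ℕ) :
    weight {ρ ∈ dyadicDom m | ρ.length ≤ t} = m t * 2⁻¹ ^ t := by
  induction t with
  | zero =>
    have hempty : {ρ ∈ dyadicDom m | ρ.length ≤ 0} = ∅ :=
      Set.eq_empty_of_forall_notMem fun ρ ⟨⟨s, hlen, _⟩, hle⟩ => by omega
    rw [hempty, hm.apply_zero]
    simp [weight]
  | succ t ih =>
    have hsplit : {ρ ∈ dyadicDom m | ρ.length ≤ t + 1} = {ρ ∈ dyadicDom m | ρ.length ≤ t} ∪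
        {ρ | ρ.length = t + 1 ∧ 2 * m t ≤ val ρ ∧ val ρ < m (t + 1)} := by
      ext ρ
      constructor
      · rintro ⟨⟨s, hlen, hval⟩, hle⟩
        rcases (show s ≤ t by omega).eq_or_lt with rfl | hlt
        · exact Or.inr ⟨hlen, hval⟩
        · exact Or.inl ⟨⟨s, hlen, hval⟩, by omega⟩
      · rintro (⟨hρ, hle⟩ | hρ)
        · exact ⟨hρ, by omega⟩
        · exact ⟨⟨t, hρ⟩, hρ.1.le⟩
    have hdisj : Disjoint {ρ ∈ dyadicDom m | ρ.length ≤ t}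
        {ρ | ρ.length = t + 1 ∧ 2 * m t ≤ val ρ ∧ val ρ < m (t + 1)} :=
      Set.disjoint_left.2 fun ρ hρ hρ' => absurd hρ.2 (by rw [hρ'.1]; omega)
    have hhalf : (2⁻¹ : ℝ≥0∞) ^ t = 2 * 2⁻¹ ^ (t + 1) := by
      rw [pow_succ', ← mul_assoc, ENNReal.mul_inv_cancel (by simp) (by simp), one_mul]
    rw [hsplit, weight_union hdisj, ih, hm.weight_layer, hhalf, ← mul_assoc, ← add_mul]
    congr 1
    exact_mod_cast (show m t * 2 + (m (t + 1) - 2 * m t) = m (t + 1) by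
      rw [mul_comm, Nat.add_sub_of_le (hm.two_mul_le t)])

theorem weight_dyadicDom (hm : DyadicApprox m x) :
    weight (dyadicDom m) = ENNReal.ofReal x := by
  have hfin (t : ℕ) : {ρ ∈ dyadicDom m | ρ.length ≤ t}.Finite :=
    (List.finite_length_le Bool t).subset fun ρ hρ => hρ.2
  have hmono : Monotone fun t => (hfin t).toFinset := fun s t hst ρ hρ => by
    rw [Set.Finite.mem_toFinset] at hρ ⊢
    exact ⟨hρ.1, hρ.2.trans hst⟩
  have hunion : ⋃ t, ((hfin t).toFinset : Set Str) = dyadicDom m := by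
    ext ρ
    simp only [Set.mem_iUnion, Set.Finite.coe_toFinset]
    exact ⟨fun ⟨_, hρ⟩ => hρ.1, fun hρ => ⟨ρ.length, hρ, le_rfl⟩⟩
  have hlim := tendsto_weight_iUnion hmono
  rw [hunion] at hlim
  simp only [Set.Finite.coe_toFinset, hm.weight_length_le] at hlim
  refine tendsto_nhds_unique hlim ((ENNReal.tendsto_ofReal hm.tendsto).congr fun t => ?_)
  rw [ENNReal.ofReal_mul (by positivity), ENNReal.ofReal_natCast,
    ENNReal.ofReal_pow (by positivity), ENNReal.ofReal_inv_of_pos two_pos, ENNReal.ofReal_ofNat]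

end DyadicApprox

theorem tendsto_floor_mul_two_pow {G : ℕ → ℚ} (hlim : Tendsto (fun s => (G s : ℝ)) atTop (nhds x))
    (hlt : ∀ s, (⌊G s * 2 ^ s⌋₊ : ℝ) * 2⁻¹ ^ s < x) :
    Tendsto (fun s => (⌊G s * 2 ^ s⌋₊ : ℝ) * 2⁻¹ ^ s) atTop (nhds x) := by
  have hlower (s : ℕ) : (G s : ℝ) - 2⁻¹ ^ s ≤ ⌊G s * 2 ^ s⌋₊ * 2⁻¹ ^ s := by
    have hunit : (2 : ℝ) ^ s * 2⁻¹ ^ s = 1 := by rw [← mul_pow]; norm_num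
    have hfloor : (G s : ℝ) * 2 ^ s ≤ ⌊G s * 2 ^ s⌋₊ + 1 := by
      exact_mod_cast (Nat.lt_floor_add_one (G s * 2 ^ s)).le
    have hscaled : (G s : ℝ) * 2 ^ s * 2⁻¹ ^ s ≤ (⌊G s * 2 ^ s⌋₊ + 1) * 2⁻¹ ^ s := by gcongr
    linear_combination hscaled - G s * hunit
  have hlim' := hlim.sub
    (tendsto_pow_atTop_nhds_zero_of_lt_one (show (0 : ℝ) ≤ 2⁻¹ by norm_num) (by norm_num))
  rw [sub_zero] at hlim'
  exact tendsto_of_tendsto_of_tendsto_of_le_of_le hlim' tendsto_const_nhds hlower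
    fun s => (hlt s).le

theorem floor_mul_two_pow_le (q : ℚ) (s : ℕ) : (⌊q * 2 ^ s⌋₊ : ℚ) * 2⁻¹ ^ s ≤ max q 0 := by
  have hunit : (2 : ℚ) ^ s * 2⁻¹ ^ s = 1 := by rw [← mul_pow]; norm_num
  rcases le_total q 0 with hq | hq
  · rw [Nat.floor_of_nonpos (mul_nonpos_of_nonpos_of_nonneg hq (by positivity))]
    simp
  · calc (⌊q * 2 ^ s⌋₊ : ℚ) * 2⁻¹ ^ s ≤ q * 2 ^ s * 2⁻¹ ^ s := by
          gcongr; exact Nat.floor_le (by positivity)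
      _ = q := by rw [mul_assoc, hunit, mul_one]
      _ ≤ max q 0 := le_max_left _ _

theorem dyadicApprox_floor {G : ℕ → ℚ} (hG : Computable G) (hmono : StrictMono G)
    (hlim : Tendsto (fun s => (G s : ℝ)) atTop (nhds x)) (hx : x ∈ Set.Ioc 0 1) :
    DyadicApprox (fun s => ⌊G s * 2 ^ s⌋₊) x := by
  have hlt (s : ℕ) : (⌊G s * 2 ^ s⌋₊ : ℝ) * 2⁻¹ ^ s < x := by
    have hle := (Rat.cast_le (K := ℝ)).2 (floor_mul_two_pow_le (G s) s)
    push_cast at hle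
    exact hle.trans_lt (max_lt (lt_of_strictMono_tendsto hmono hlim s) hx.1)
  refine ⟨by fun_prop, fun s => ?_, hlt, hx.2, tendsto_floor_mul_two_pow hlim hlt⟩
  rcases le_or_gt (G s * 2 ^ s) 0 with hneg | hpos
  · simp [Nat.floor_of_nonpos hneg]
  · refine Nat.le_floor ?_
    have hfloor := Nat.floor_le hpos.le
    have hstep : G s * 2 ^ s ≤ G (s + 1) * 2 ^ s := by gcongr; exact (hmono s.lt_succ_self).le
    push_cast
    rw [pow_succ]
    linarith

end DyadicDomain

section OmegaLikeToOmega

open MeasureTheory Filter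

/-- The machine that computes `U p` from `ρp` and outputs the empty string on `S`. -/
noncomputable def graft (ρ : Str) (S : Set Str) (U : Str →. Str) : Str →. Str := fun σ =>
  if ρ <+: σ then U (σ.drop ρ.length) else if σ ∈ S then Part.some [] else Part.none

variable {ρ : Str} {S : Set Str} {U : Str →. Str}

theorem graft_append (p : Str) : graft ρ S U (ρ ++ p) = U p := by
  simp [graft]

theorem isMachine_graft (hU : IsMachine U) (hS : ComputablePred (· ∈ S)) :
    IsMachine (graft ρ S U) := by
  have hdrop : Computable fun σ : Str => σ.drop ρ.length :=
    Primrec.list_drop.to_comp.comp (Computable.const _) Computable.id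
  have hprefix : Computable fun σ : Str => decide (ρ <+: σ) := by fun_prop
  have hmem : Computable fun σ : Str => decide (σ ∈ S) := computable_decide hS
  refine (Partrec.cond hprefix (hU.comp hdrop)
    (Partrec.cond hmem (Computable.const []).partrec Partrec.none)).of_eq fun σ => ?_
  simp only [Bool.cond_decide, graft]
  rfl

theorem dom_graft (hinc : ∀ σ ∈ S, ¬ Comparable σ ρ) :
    {σ | (graft ρ S U σ).Dom} = (ρ ++ ·) '' {p | (U p).Dom} ∪ S := by
  ext σ
  by_cases hσ : ρ <+: σ
  · obtain ⟨p, rfl⟩ := hσ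
    have hp : ρ ++ p ∉ S := fun hp => hinc _ hp (Or.inr (List.prefix_append _ _))
    simp [graft_append, hp]
  · have hσ' : σ ∉ (ρ ++ ·) '' {p | (U p).Dom} := by
      rintro ⟨p, -, rfl⟩
      exact hσ (List.prefix_append _ _)
    simp only [Set.mem_ofPred_eq, graft, if_neg hσ, Set.mem_union, hσ', false_or]
    split_ifs with h <;> simp [h]

theorem prefixFreeMachine_graft (hU : PrefixFreeMachine U) (hS : ComputablePred (· ∈ S))
    (hpf : PrefixFree S) (hinc : ∀ σ ∈ S, ¬ Comparable σ ρ) :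
    PrefixFreeMachine (graft ρ S U) := by
  refine ⟨isMachine_graft hU.1 hS, ?_⟩
  have hcomparable {σ p : Str} (h : Comparable σ (ρ ++ p)) : Comparable σ ρ :=
    h.elim (fun h => List.prefix_or_prefix_of_prefix h (List.prefix_append _ _))
      fun h => Or.inr ((List.prefix_append _ _).trans h)
  rw [dom_graft hinc]
  rintro _ (⟨p, hp, rfl⟩ | hσ) _ (⟨p', hp', rfl⟩ | hτ) hprefix
  · rw [hU.2 p hp p' hp' ((List.prefix_append_right_inj ρ).1 hprefix)]
  · exact absurd (hcomparable (Or.inr hprefix)) (hinc _ hτ)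
  · exact absurd (hcomparable (Or.inl hprefix)) (hinc _ hσ)
  · exact hpf _ hσ _ hτ hprefix

theorem universalPFMachine_graft (hU : UniversalPFMachine U) (hS : ComputablePred (· ∈ S))
    (hpf : PrefixFree S) (hinc : ∀ σ ∈ S, ¬ Comparable σ ρ) :
    UniversalPFMachine (graft ρ S U) := by
  refine ⟨prefixFreeMachine_graft hU.1 hS hpf hinc, fun M hM => ?_⟩
  obtain ⟨c, hc⟩ := hU.2 M hM
  refine ⟨ρ.length + c, Cplx_le_add_iff.2 fun σ τ hτ => ?_⟩
  obtain ⟨p, hp, hlen⟩ := Cplx_le_add_iff.1 hc σ τ hτ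
  exact ⟨ρ ++ p, graft_append (S := S) p ▸ hp, by rw [List.length_append]; omega⟩

theorem FairCoin.Omega_graft {μ : Measure Seq} (hμ : FairCoin μ) (hU : PrefixFreeMachine U)
    (hpf : PrefixFree S) (hinc : ∀ σ ∈ S, ¬ Comparable σ ρ) :
    Omega (graft ρ S U) = 2⁻¹ ^ ρ.length * Omega U + (weight S).toReal := by
  have hdisj : Disjoint ((ρ ++ ·) '' {p | (U p).Dom}) S := by
    refine Set.disjoint_left.2 ?_
    rintro _ ⟨p, -, rfl⟩ hp
    exact hinc _ hp (Or.inr (List.prefix_append _ _))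
  rw [Omega_eq_toReal_weight, Omega_eq_toReal_weight, dom_graft hinc, weight_union hdisj,
    weight_image_append, ENNReal.toReal_add (ENNReal.mul_ne_top (by simp) (hμ.weight_ne_top hU.2))
      (hμ.weight_ne_top hpf)]
  simp

theorem computable_partialSups {g : ℕ → ℚ} (hg : Computable g) :
    Computable fun s => partialSups g s := by
  let step (_ : ℕ) (x : ℕ × ℚ) : ℚ := if x.2 ≤ g (x.1 + 1) then g (x.1 + 1) else x.2
  have hstep : Computable fun x : ℕ × ℕ × ℚ => step x.1 x.2 := by fun_prop
  refine (Computable.nat_rec Computable.id (Computable.const (g 0)) hstep).of_eq fun s => ?_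
  induction s with
  | zero => exact (partialSups_zero g).symm
  | succ s ih =>
    simp only [id] at ih
    simp only [id, ih, step, partialSups_add_one, max_def]

theorem SolovayLE.leftCE_sub_mul {α β : ℝ} (h : SolovayLE β α) (hα : LeftCE α) :
    ∃ c : ℕ, ∀ δ : ℚ, 0 ≤ δ → δ * c ≤ 1 → LeftCE (α - δ * β) := by
  obtain ⟨c, f, hf, hred⟩ := h
  obtain ⟨a, ha, hamono, halim⟩ := hα
  have haα := lt_of_strictMono_tendsto hamono halim
  choose F hFmem hFlt hFdist using fun s => hred (a s) (haα s)
  have hF : Computable F := (hf.comp ha).of_eq_tot hFmem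
  refine ⟨c, fun δ hδ hδc => ?_⟩
  have : (0 : ℝ) ≤ δ := by exact_mod_cast hδ
  have hδc' : (δ * c : ℝ) ≤ 1 := by exact_mod_cast hδc
  let g (s : ℕ) : ℚ := a s - δ * F s
  have hg : Computable g := by fun_prop
  have hupper (s : ℕ) : (g s : ℝ) ≤ α - δ * β := by
    have hdist : δ * (β - F s) ≤ α - a s :=
      calc δ * (β - F s) ≤ δ * (c * (α - a s)) := by gcongr; exact (hFdist s).le
        _ = δ * c * (α - a s) := by ring
        _ ≤ α - a s := mul_le_of_le_one_left (sub_nonneg.2 (haα s).le) hδc'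
    push_cast [g]
    linarith
  have hlower (s : ℕ) : a s - δ * β ≤ (partialSups g s : ℚ) := by
    refine le_trans ?_ (Rat.cast_le.2 (le_partialSups g s))
    have hFβ : δ * F s ≤ δ * β := by gcongr; exact (hFlt s).le
    push_cast [g]
    linarith
  have hupper' (s : ℕ) : ((partialSups g s : ℚ) : ℝ) ≤ α - δ * β := by
    obtain ⟨t, -, ht⟩ := exists_partialSups_eq g s
    exact ht ▸ hupper t
  exact .of_monotone (computable_partialSups hg) (partialSups g).monotone
    (tendsto_of_tendsto_of_tendsto_of_le_of_le (halim.sub_const _) tendsto_const_nhds hlower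
      hupper')

theorem val_replicate_true (k : ℕ) : val (List.replicate k true) + 1 = 2 ^ k := by
  induction k with
  | zero => rfl
  | succ k ih =>
    rw [List.replicate_succ', val_concat, pow_succ, Bool.toNat_true]
    omega

theorem leftEnd_replicate_true (k : ℕ) : leftEnd (List.replicate k true) = 1 - 2⁻¹ ^ k := by
  have hval : (val (List.replicate k true) : ℚ) + 1 = 2 ^ k := by
    exact_mod_cast val_replicate_true k
  have hunit : (2 : ℚ) ^ k * 2⁻¹ ^ k = 1 := by rw [← mul_pow]; norm_num
  rw [leftEnd, List.length_replicate]
  linear_combination 2⁻¹ ^ k * hval + hunit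

theorem exists_universalPFMachine_Omega_eq {μ : Measure Seq} (hμ : FairCoin μ)
    (hU : UniversalPFMachine U) {k : ℕ} {x : ℝ} (hx : LeftCE x) (hpos : 0 < x)
    (hle : x ≤ 1 - 2⁻¹ ^ k) :
    ∃ V : Str →. Str, UniversalPFMachine V ∧ Omega V = 2⁻¹ ^ k * Omega U + x := by
  obtain ⟨G, hG, hGmono, hGlim⟩ := hx
  have hm := dyadicApprox_floor hG hGmono hGlim
    ⟨hpos, hle.trans (sub_le_self _ (by positivity))⟩
  have hinc : ∀ σ ∈ dyadicDom fun s => ⌊G s * 2 ^ s⌋₊,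
      ¬ Comparable σ (List.replicate k true) := by
    refine fun σ hσ => not_comparable_of_rightEnd_le ((Rat.cast_le (K := ℝ)).1 ?_)
    rw [leftEnd_replicate_true]
    push_cast
    exact (hm.rightEnd_lt hσ).le.trans hle
  refine ⟨_, universalPFMachine_graft hU (computablePred_mem_dyadicDom hm.computable)
    hm.prefixFree hinc, ?_⟩
  rw [hμ.Omega_graft hU.1 hm.prefixFree hinc, hm.weight_dyadicDom, ENNReal.toReal_ofReal hpos.le,
    List.length_replicate]

/-- The share of `Ω_U` in `α` is made so small that what is left of `α` is again left-c.e. -/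
theorem exists_Omega_eq_of_solovayLE {μ : Measure Seq} (hμ : FairCoin μ) {α : ℝ}
    (hα01 : α ∈ Set.Ioo 0 1) (hα : LeftCE α) (hlike : ∀ β : ℝ, LeftCE β → SolovayLE β α) :
    ∃ V : Str →. Str, UniversalPFMachine V ∧ Omega V = α := by
  obtain ⟨U, hU⟩ := exists_universalPFMachine
  obtain ⟨c, hc⟩ := (hlike _ (hμ.leftCE_Omega hU.1)).leftCE_sub_mul hα
  obtain ⟨k, hk⟩ := exists_pow_lt_of_lt_one (show 0 < min α (min (1 - α) (1 / (c + 1))) from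
    lt_min hα01.1 (lt_min (sub_pos.2 hα01.2) (by positivity))) (show (2 : ℝ)⁻¹ < 1 by norm_num)
  rw [lt_min_iff, lt_min_iff, lt_div_iff₀ (by positivity)] at hk
  obtain ⟨hkα, hk1, hkc⟩ := hk
  have hpow : (0 : ℝ) < 2⁻¹ ^ k := by positivity
  have hγ : LeftCE (α - 2⁻¹ ^ k * Omega U) := by
    have hkc' : (2 : ℚ)⁻¹ ^ k * c ≤ 1 := by
      refine (Rat.cast_le (K := ℝ)).1 ?_
      push_cast
      linarith
    have hγ := hc (2⁻¹ ^ k) (by positivity) hkc'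
    push_cast at hγ
    exact hγ
  have hshare : 2⁻¹ ^ k * Omega U ≤ 2⁻¹ ^ k :=
    mul_le_of_le_one_right hpow.le (hμ.Omega_le_one hU.1)
  have hΩ : 0 ≤ Omega U := by rw [Omega_eq_toReal_weight]; exact ENNReal.toReal_nonneg
  obtain ⟨V, hV, hVΩ⟩ := exists_universalPFMachine_Omega_eq (k := k) hμ hU hγ (by linarith)
    (by have := mul_nonneg hpow.le hΩ; linarith)
  exact ⟨V, hV, by rw [hVΩ]; ring⟩

end OmegaLikeToOmega

section OmegaToRandom

open MeasureTheory Filter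

variable {μ : Measure Seq} {V : Str →. Str} {m : ℕ → ℕ}

theorem cyl_subset_of_prefix {σ τ : Str} (h : σ <+: τ) : cyl τ ⊆ cyl σ := by
  intro A hA
  have hpre : pre A σ.length <+: τ := by
    have hprefix := pre_prefix_pre A h.length_le
    rwa [show pre A τ.length = τ from hA] at hprefix
  exact (List.prefix_of_prefix_length_le hpre h (by simp)).eq_of_length (by simp)

theorem two_inv_pow_sub_le (n e : ℕ) : (2⁻¹ : ℝ≥0∞) ^ (n - e) ≤ 2 ^ e * 2⁻¹ ^ n := by
  have hunit : (2 : ℝ≥0∞) ^ e * 2⁻¹ ^ e = 1 := by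
    rw [← mul_pow, ENNReal.mul_inv_cancel (by simp) (by simp), one_pow]
  calc (2⁻¹ : ℝ≥0∞) ^ (n - e) = 2 ^ e * 2⁻¹ ^ (e + (n - e)) := by
        rw [pow_add, ← mul_assoc, hunit, one_mul]
    _ ≤ 2 ^ e * 2⁻¹ ^ n := by
        gcongr 2 ^ e * ?_
        exact pow_le_pow_right_of_le_one' (by simp) (by omega)

theorem tsum_two_inv_pow_sub_le_one {R : ℕ × Str → Prop}
    (hR : ∀ e, weight {ρ | R (e, ρ)} ≤ 2⁻¹ ^ (2 * e + 2)) :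
    ∑' x : {x // R x}, (2⁻¹ : ℝ≥0∞) ^ (x.1.2.length - x.1.1) ≤ 1 := by
  have hfiber (e : ℕ) : ∑' ρ, {x | R x}.indicator
      (fun x => (2⁻¹ : ℝ≥0∞) ^ (x.2.length - x.1)) (e, ρ) ≤ 2⁻¹ ^ (e + 1) :=
    calc ∑' ρ, {x | R x}.indicator (fun x => (2⁻¹ : ℝ≥0∞) ^ (x.2.length - x.1)) (e, ρ)
        = ∑' ρ : {ρ | R (e, ρ)}, 2⁻¹ ^ ((ρ : Str).length - e) :=
          (tsum_subtype {ρ | R (e, ρ)} fun ρ : Str => (2⁻¹ : ℝ≥0∞) ^ (ρ.length - e)).symm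
      _ ≤ ∑' ρ : {ρ | R (e, ρ)}, 2 ^ e * 2⁻¹ ^ (ρ : Str).length :=
          ENNReal.tsum_le_tsum fun ρ => two_inv_pow_sub_le _ _
      _ = 2 ^ e * weight {ρ | R (e, ρ)} := ENNReal.tsum_mul_left
      _ ≤ 2 ^ e * 2⁻¹ ^ (2 * e + 2) := by gcongr; exact hR e
      _ = 2⁻¹ ^ (e + 2) := by
          rw [show 2 * e + 2 = e + (e + 2) by ring, pow_add, ← mul_assoc, ← mul_pow,
            ENNReal.mul_inv_cancel (by simp) (by simp), one_pow, one_mul]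
      _ ≤ 2⁻¹ ^ (e + 1) := pow_le_pow_right_of_le_one' (by simp) (by omega)
  calc ∑' x : {x // R x}, (2⁻¹ : ℝ≥0∞) ^ (x.1.2.length - x.1.1)
      = ∑' x, {x | R x}.indicator (fun x => (2⁻¹ : ℝ≥0∞) ^ (x.2.length - x.1)) x :=
        tsum_subtype {x | R x} fun x => (2⁻¹ : ℝ≥0∞) ^ (x.2.length - x.1)
    _ = ∑' e, ∑' ρ, {x | R x}.indicator (fun x => (2⁻¹ : ℝ≥0∞) ^ (x.2.length - x.1)) (e, ρ) :=
        ENNReal.tsum_prod'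
    _ ≤ ∑' e, 2⁻¹ ^ (e + 1) := ENNReal.tsum_le_tsum hfiber
    _ = 1 := by
        rw [ENNReal.tsum_geometric_add_one, ENNReal.one_sub_inv_two, inv_inv,
          ENNReal.inv_mul_cancel (by simp) (by simp)]

/-- The strings in the `e`-th section of `R` weigh so little that they can be compressed by `e`
bits, which for `e = c + 2` beats the coding constant `c` of `V`. -/
theorem UniversalPFMachine.exists_shorter_programs (hV : UniversalPFMachine V)
    {R : ℕ × Str → Prop} (hR : ComputablePred R)
    (hw : ∀ e, weight {ρ | R (e, ρ)} ≤ 2⁻¹ ^ (2 * e + 2)) :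
    ∃ (e : ℕ) (prog : Str → Str), ∀ ρ, R (e, ρ) → e ≤ ρ.length →
      ρ ∈ V (prog ρ) ∧ (prog ρ).length + 1 ≤ ρ.length := by
  obtain ⟨M, hM, hspec⟩ := exists_prefixFreeMachine_of_tsum_le_one (out := Prod.snd)
    (len := fun x => x.2.length - x.1) hR (by fun_prop) Computable.snd
    (tsum_two_inv_pow_sub_le_one hw)
  obtain ⟨c, hc⟩ := hV.2 M hM
  have hprog (ρ : Str) (hρ : R (c + 2, ρ)) (hlen : c + 2 ≤ ρ.length) :
      ∃ p, ρ ∈ V p ∧ p.length + 1 ≤ ρ.length := by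
    obtain ⟨q, hq, hqM⟩ := hspec _ hρ
    obtain ⟨p, hp, hpq⟩ := Cplx_le_add_iff.1 hc q _ hqM
    exact ⟨p, hp, by simp only at hq; omega⟩
  choose! prog hprog using hprog
  exact ⟨c + 2, prog, hprog⟩

theorem FairCoin.exists_dyadicApprox_Omega (hμ : FairCoin μ) (hV : PrefixFreeMachine V)
    (hpos : 0 < Omega V) :
    ∃ (D : ℕ → Finset Str) (m : ℕ → ℕ), DyadicApprox m (Omega V) ∧
      ∀ s, (D s : Set Str) ⊆ {p | (V p).Dom} ∧ (∀ p ∈ D s, ∀ y ∈ V p, y.length < s) ∧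
        m s * 2⁻¹ ^ s ≤ weight (D s) := by
  obtain ⟨D, hD, hdom, hlen, hcomp⟩ := exists_domain_approximation hV.1
  let G (s : ℕ) : ℚ := ∑ p ∈ D s, 2⁻¹ ^ p.length - 2⁻¹ ^ s
  have hG : Computable G := by fun_prop
  refine ⟨D, fun s => ⌊G s * 2 ^ s⌋₊, dyadicApprox_floor hG
    (strictMono_sub_two_inv_pow (monotone_sum_two_inv_pow hD))
    (tendsto_sub_two_inv_pow (hμ.tendsto_sum_domain hV hD hdom)) ⟨hpos, hμ.Omega_le_one hV⟩,
    fun s => ⟨hdom ▸ Set.subset_iUnion (fun s => (D s : Set Str)) s, hlen s, ?_⟩⟩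
  have hle : (⌊G s * 2 ^ s⌋₊ : ℚ) * 2⁻¹ ^ s ≤ ∑ p ∈ D s, 2⁻¹ ^ p.length :=
    (floor_mul_two_pow_le _ _).trans (max_le (sub_le_self _ (by positivity)) (by positivity))
  have htop : ∑ p ∈ D s, (2⁻¹ : ℝ≥0∞) ^ p.length ≠ ⊤ := ENNReal.sum_ne_top.2 fun p _ => by simp
  rw [weight_coe_finset, ← ENNReal.toReal_le_toReal (by finiteness) htop, toReal_sum_two_inv_pow]
  simpa using (Rat.cast_le (K := ℝ)).2 hle

/-- The strings of `dyadicDom m` longer than `t` weigh `Ω_V - m t / 2ᵗ`, and their programs at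
least twice as much; but `D` leaves at most `Ω_V - m t / 2ᵗ` of the domain of `V` for these
programs. -/
theorem FairCoin.Omega_le_of_shorter_programs (hμ : FairCoin μ) (hV : PrefixFreeMachine V)
    (hm : DyadicApprox m (Omega V)) {D : Set Str} {t : ℕ} (hD : D ⊆ {p | (V p).Dom})
    (hshort : ∀ p ∈ D, ∀ y ∈ V p, y.length < t) (hmD : m t * 2⁻¹ ^ t ≤ weight D)
    {prog : Str → Str} (hprog : ∀ ρ ∈ dyadicDom m, t < ρ.length →
      ρ ∈ V (prog ρ) ∧ (prog ρ).length + 1 ≤ ρ.length) :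
    Omega V ≤ m t * 2⁻¹ ^ t := by
  let late := {ρ ∈ dyadicDom m | t < ρ.length}
  have htop : weight {p | (V p).Dom} ≠ ⊤ := hμ.weight_ne_top hV.2
  have hearly : weight {p | (V p).Dom} = m t * 2⁻¹ ^ t + weight late := by
    have hsplit : dyadicDom m = {ρ ∈ dyadicDom m | ρ.length ≤ t} ∪ late := by
      ext ρ
      simp only [late, Set.mem_union, Set.mem_ofPred_eq, ← and_or_left, le_or_gt, and_true]
    have hdisj : Disjoint {ρ ∈ dyadicDom m | ρ.length ≤ t} late :=
      Set.disjoint_left.2 fun ρ hρ hρ' => hρ.2.not_gt hρ'.2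
    rw [← ENNReal.ofReal_toReal htop, ← Omega_eq_toReal_weight, ← hm.weight_dyadicDom, hsplit,
      weight_union hdisj, hm.weight_length_le]
  have hinj : Set.InjOn prog late := fun ρ hρ ρ' hρ' h =>
    Part.mem_unique (h ▸ (hprog ρ hρ.1 hρ.2).1) (hprog ρ' hρ'.1 hρ'.2).1
  have hmaps : Set.MapsTo prog late ({p | (V p).Dom} \ D) := fun ρ hρ =>
    have hρV := (hprog ρ hρ.1 hρ.2).1
    ⟨Part.dom_iff_mem.2 ⟨ρ, hρV⟩, fun hmem => (hshort _ hmem ρ hρV).not_ge hρ.2.le⟩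
  have hprograms : m t * 2⁻¹ ^ t + 2 * weight late ≤ weight {p | (V p).Dom} :=
    calc m t * 2⁻¹ ^ t + 2 * weight late ≤ weight D + weight ({p | (V p).Dom} \ D) :=
          add_le_add hmD (two_mul_weight_le hinj hmaps fun ρ hρ => (hprog ρ hρ.1 hρ.2).2)
      _ = weight {p | (V p).Dom} := by
          rw [← weight_union Set.disjoint_sdiff_right, Set.union_sdiff_cancel hD]
  have hlate_top : weight late ≠ ⊤ := ne_top_of_le_ne_top htop (hearly ▸ le_add_self)
  have hlate : weight late = 0 := by
    rw [hearly, two_mul, ← add_assoc] at hprograms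
    have hne : m t * 2⁻¹ ^ t + weight late ≠ ⊤ := hearly ▸ htop
    simpa using (ENNReal.add_le_add_iff_left hne).1 (hprograms.trans_eq (add_zero _).symm)
  rw [Omega_eq_toReal_weight, hearly, hlate, add_zero]
  simp

theorem DyadicApprox.prefix_of_lt_length {x : ℝ} (hm : DyadicApprox m x) {σ ρ : Str} {s : ℕ}
    (hleft : leftEnd σ < (m s : ℝ) * 2⁻¹ ^ s) (hright : x ≤ rightEnd σ) (hρ : ρ ∈ dyadicDom m)
    (hlen : s < ρ.length) : σ <+: ρ := by
  obtain ⟨r, hr, hρleft, -⟩ := dyadicDom_bounds hρ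
  have hleft' : leftEnd σ ≤ m s * 2⁻¹ ^ s := by
    refine (Rat.cast_le (K := ℝ)).1 ?_
    push_cast
    exact hleft.le
  exact prefix_iff_leftEnd_le_and_rightEnd_le.2
    ⟨(hleft'.trans (hm.monotone_ratio (show s ≤ r by omega))).trans hρleft,
      Rat.cast_le.1 ((hm.rightEnd_lt hρ).le.trans hright)⟩

theorem computablePred_exists_take {w : ℕ → ℕ × Str → Prop}
    (hw : ComputablePred fun x : ℕ × ℕ × Str => w x.1 x.2) {f : ℕ → ℕ} (hf : Computable f) :
    ComputablePred fun x : ℕ × Str => ∃ k < x.2.length + 1, w x.2.length (f x.1, x.2.take k) := by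
  have htake : Computable fun x : (ℕ × Str) × ℕ => x.1.2.take x.2 :=
    Primrec.list_take.to_comp.comp Computable.snd (Computable.snd.comp Computable.fst)
  have hstage : ComputablePred fun x : (ℕ × Str) × ℕ => w x.1.2.length (f x.1.1, x.1.2.take x.2) :=
    computablePred_comp (f := fun x : (ℕ × Str) × ℕ => (x.1.2.length, f x.1.1, x.1.2.take x.2)) hw
      (by fun_prop)
  exact computablePred_exists_lt hstage (by fun_prop)

/-- The requests are the strings of `dyadicDom m` that are seen, within as many steps as the string
is long, to lie in a component of the test. If some interval of every component contains `Ω_V`,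
then these are eventually all strings of `dyadicDom m`. -/
theorem UniversalPFMachine.exists_not_mem_interval (hμ : FairCoin μ) (hV : UniversalPFMachine V)
    (hpos : 0 < Omega V) {W : Set (ℕ × Str)} (hW : CEPred (· ∈ W))
    (hμW : ∀ i, μ (⋃ σ ∈ {σ : Str | (i, σ) ∈ W}, cyl σ) ≤ 2⁻¹ ^ i) :
    ∃ i, ∀ σ, (i, σ) ∈ W → leftEnd σ < Omega V → rightEnd σ < Omega V := by
  by_contra! hcover
  obtain ⟨D, m, hm, hD⟩ := hμ.exists_dyadicApprox_Omega hV.1 hpos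
  obtain ⟨w, hw, hwmono, hwspec⟩ := hW.exists_stage_approximation
  let R (x : ℕ × Str) : Prop := x.2 ∈ dyadicDom m ∧
    ∃ k < x.2.length + 1, w x.2.length (2 * x.1 + 2, x.2.take k)
  have hR : ComputablePred R :=
    computablePred_and (computablePred_comp (f := Prod.snd)
      (computablePred_mem_dyadicDom hm.computable) Computable.snd)
      (computablePred_exists_take (f := fun e => 2 * e + 2) hw (by fun_prop))
  have hcyl {e : ℕ} {ρ : Str} (hρ : R (e, ρ)) :
      cyl ρ ⊆ ⋃ σ ∈ {σ : Str | (2 * e + 2, σ) ∈ W}, cyl σ := by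
    obtain ⟨-, k, -, hk⟩ := hρ
    exact (cyl_subset_of_prefix (List.take_prefix k ρ)).trans
      (Set.subset_biUnion_of_mem (u := cyl) (hwspec.2 ⟨_, hk⟩))
  have hweight (e : ℕ) : weight {ρ | R (e, ρ)} ≤ 2⁻¹ ^ (2 * e + 2) :=
    (hμ.weight_le_measure (fun ρ hρ ρ' hρ' => hm.prefixFree ρ hρ.1 ρ' hρ'.1)
      fun ρ hρ => hcyl hρ).trans (hμW _)
  obtain ⟨e, prog, hprog⟩ := hV.exists_shorter_programs hR hweight
  obtain ⟨σ, hσW, hleft, hright⟩ := hcover (2 * e + 2)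
  obtain ⟨s₀, hs₀⟩ := hwspec.1 hσW
  obtain ⟨s₁, hs₁⟩ := (hm.tendsto.eventually_const_lt hleft).exists
  let t := max e (max s₀ s₁)
  obtain ⟨het, hs₀t, hs₁t⟩ : e ≤ t ∧ s₀ ≤ t ∧ s₁ ≤ t := by simp [t]
  refine (hm.lt t).not_ge (hμ.Omega_le_of_shorter_programs hV.1 hm (hD t).1 (hD t).2.1 (hD t).2.2
    (prog := prog) fun ρ hρ htρ => hprog ρ ⟨hρ, σ.length, ?_⟩ (het.trans htρ.le))
  have hprefix : σ <+: ρ := hm.prefix_of_lt_length hs₁ hright hρ (hs₁t.trans_lt htρ)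
  rw [← List.prefix_iff_eq_take.1 hprefix]
  exact ⟨Nat.lt_succ_of_le hprefix.length_le, hwmono (hs₀t.trans htρ.le) hs₀⟩

theorem exists_test_of_leftEnd_pos (hμ : FairCoin μ) {σ : Str} (hσ : 0 < leftEnd σ) :
    ∃ W : Set (ℕ × Str), CEPred (· ∈ W) ∧
      (∀ i, μ (⋃ τ ∈ {τ : Str | (i, τ) ∈ W}, cyl τ) ≤ 2⁻¹ ^ i) ∧
      ∀ i, ∃ τ, (i, τ) ∈ W ∧ rightEnd τ = leftEnd σ := by
  have hval : 0 < val σ := Nat.pos_of_ne_zero fun h => by simp [leftEnd, h] at hσ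
  let f (i : ℕ) : Str := strOf (i + σ.length) (val σ * 2 ^ i - 1)
  have hf : Computable f := by fun_prop
  refine ⟨{x | x.2 = f x.1}, ?_, fun i => ?_, fun i => ⟨f i, rfl, ?_⟩⟩
  · have hgraph : ComputablePred fun x : ℕ × Str => x.2 = f x.1 := by fun_prop
    exact hgraph.to_re
  · have hunion : ⋃ τ ∈ {τ : Str | (i, τ) ∈ {x : ℕ × Str | x.2 = f x.1}}, cyl τ = cyl (f i) := by
      simp
    rw [hunion, hμ, length_strOf]
    exact pow_le_pow_right_of_le_one' (by simp) (by omega)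
  · have hlt : val σ * 2 ^ i - 1 < 2 ^ (i + σ.length) :=
      calc val σ * 2 ^ i - 1 ≤ val σ * 2 ^ i := Nat.sub_le _ _
        _ < 2 ^ σ.length * 2 ^ i := by gcongr; exact val_lt_two_pow σ
        _ = 2 ^ (i + σ.length) := by ring
    have hvalf : (val (f i) : ℚ) + 1 = val σ * 2 ^ i := by
      rw [val_strOf, Nat.mod_eq_of_lt hlt]
      exact_mod_cast Nat.sub_add_cancel (Nat.mul_pos hval (by positivity))
    have hunit : (2 : ℚ) ^ i * 2⁻¹ ^ i = 1 := by rw [← mul_pow]; norm_num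
    rw [rightEnd_eq, hvalf, leftEnd, length_strOf, pow_add]
    linear_combination (val σ * 2⁻¹ ^ σ.length : ℚ) * hunit

theorem UniversalPFMachine.leftEnd_ne_Omega (hμ : FairCoin μ) (hV : UniversalPFMachine V)
    (hpos : 0 < Omega V) (σ : Str) : (leftEnd σ : ℝ) ≠ Omega V := by
  intro heq
  obtain ⟨W, hW, hμW, hcover⟩ := exists_test_of_leftEnd_pos hμ (σ := σ) (by
    rw [← heq] at hpos
    exact_mod_cast hpos)
  obtain ⟨i, hi⟩ := hV.exists_not_mem_interval hμ hpos hW hμW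
  obtain ⟨τ, hτ, hright⟩ := hcover i
  have hlt := hi τ hτ (by rw [← heq, ← hright]; exact_mod_cast leftEnd_lt_rightEnd τ)
  exact hlt.ne (by rw [hright, heq])

theorem mlRandom_of_Omega (hμ : FairCoin μ) (hV : UniversalPFMachine V) (hpos : 0 < Omega V)
    {A : Seq} (hA : binExp A = Omega V) : MLRandom μ A := by
  rintro U ⟨W, hW, hU, hμU⟩ hmem
  obtain ⟨i, hi⟩ := hV.exists_not_mem_interval hμ hpos hW fun i => hU i ▸ hμU i
  have hAi := Set.mem_iInter.1 hmem i
  rw [hU] at hAi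
  obtain ⟨σ, hσ, hAσ⟩ := Set.mem_iUnion₂.1 hAi
  obtain ⟨hleft, hright⟩ := binExp_mem_Icc_of_mem_cyl hAσ
  rw [hA] at hleft hright
  exact (hi σ hσ (hleft.lt_of_ne (hV.leftEnd_ne_Omega hμ hpos σ))).not_ge hright

end OmegaToRandom

/-- **Characterization of `Ω`-numbers** (Solovay; Calude–Hertling–Khoussainov–Wang;
Kučera–Slaman): for a left-c.e. real `α ∈ (0,1)` the following are equivalent:
(i) `α = Ω_V` for some universal prefix-free machine `V`; (ii) `α` is `Ω`-like, i.e.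
`β ≤_S α` for every left-c.e. real `β`; (iii) `α` is Martin-Löf random. -/
theorem omega_number_characterization (μ : MeasureTheory.Measure Seq)
    (hμ : FairCoin μ) (α : ℝ) (h0 : 0 < α) (h1 : α < 1) (hα : LeftCE α) :
    List.TFAE
      [∃ V : Str →. Str, UniversalPFMachine V ∧ Omega V = α,
       ∀ β : ℝ, LeftCE β → SolovayLE β α,
       ∀ A : Seq, binExp A = α → MLRandom μ A] := by
  tfae_have 1 → 3 := by
    rintro ⟨V, hV, rfl⟩ A hA
    exact mlRandom_of_Omega hμ hV h0 hA
  tfae_have 3 → 2 := fun hrand β hβ => solovayLE_of_mlRandom hμ ⟨h0.le, h1.le⟩ hα hrand hβ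
  tfae_have 2 → 1 := exists_Omega_eq_of_solovayLE hμ ⟨h0, h1⟩ hα
  tfae_finish

end AR
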